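/- For every integer n ≥ 1, the q-Eulerian polynomial has the γ-expansion A_n(q,t) = Σ_{k=0}^{⌊(n−1)/2⌋} ξ_{n,k}(q) · t^{k} (1+t)^{n−1−2k}, where ξ_{n,k}(q) = Σ q^{inv(σ)}, the sum running over all permutations σ ∈ S_n whose descent set DES(σ) is a subset of {2,…,n−1} containing no two consecutive integers and has exactly k elements (i.e., σ has k descents, no double descents, and no first descent). -/

import Mathlib

open Polynomial Finset

/-- `S` contains no two consecutive integers. -/
def NoTwoConsec (S : Finset ℕ) : Prop := ∀ i ∈ S, i + 1 ∉ S

instance (S : Finset ℕ) : Decidable (NoTwoConsec S) :=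
  inferInstanceAs (Decidable (∀ i ∈ S, i + 1 ∉ S))

/-- `σ(i)` in one-line notation, as a value in `{1, …, n}` for `i ∈ {1, …, n}`
(and `0` for out-of-range `i`). -/
def pval {n : ℕ} (σ : Equiv.Perm (Fin n)) (i : ℕ) : ℕ :=
  if h : 1 ≤ i ∧ i ≤ n then (σ ⟨i - 1, by omega⟩ : ℕ) + 1 else 0

/-- The descent set `DES(σ) = {i ∈ {1,…,n-1} : σ(i) > σ(i+1)}`. -/
def pDES {n : ℕ} (σ : Equiv.Perm (Fin n)) : Finset ℕ :=
  (Finset.Icc 1 (n - 1)).filter fun i => pval σ (i + 1) < pval σ i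

/-- The major index `maj(σ) = Σ_{i ∈ DES(σ)} i`. -/
def pmaj {n : ℕ} (σ : Equiv.Perm (Fin n)) : ℕ := ∑ i ∈ pDES σ, i

/-- The excedance number `exc(σ) = #{i : σ(i) > i}`. -/
def pexc {n : ℕ} (σ : Equiv.Perm (Fin n)) : ℕ :=
  ((Finset.Icc 1 n).filter fun i => i < pval σ i).card

/-- The inversion number `inv(σ) = #{(i,j) : 1 ≤ i < j ≤ n, σ(i) > σ(j)}`. -/
def pinv {n : ℕ} (σ : Equiv.Perm (Fin n)) : ℕ :=
  (((Finset.Icc 1 n) ×ˢ (Finset.Icc 1 n)).filter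
    fun p => p.1 < p.2 ∧ pval σ p.2 < pval σ p.1).card

/-- The Shareshian–Wachs `q`-Eulerian polynomial
`A_n(q,t) = Σ_{σ ∈ S_n} q^{maj(σ)-exc(σ)} t^{exc(σ)}`, as an element of
`ℤ[q][t]` (`q` is the inner variable, `t` the outer one). -/
noncomputable def Apoly (n : ℕ) : Polynomial (Polynomial ℤ) :=
  ∑ σ : Equiv.Perm (Fin n),
    Polynomial.C (Polynomial.X ^ (pmaj σ - pexc σ)) * Polynomial.X ^ pexc σ

open Polynomial Finset
open scoped ENNReal

lemma tsum_pi_prod : ∀ {r : ℕ} {β : Fin r → Type} (f : ∀ b, β b → ℝ≥0∞),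
    ∑' k : (∀ b, β b), ∏ b, f b (k b) = ∏ b, ∑' k, f b k := by
  intro r
  induction r with
  | zero => intro β f; simp
  | succ r ih =>
    intro β f
    rw [← (Fin.consEquiv β).tsum_eq, ENNReal.tsum_prod', Fin.prod_univ_succ, ← ih,
      ← ENNReal.tsum_mul_right]
    refine tsum_congr fun a => ?_
    rw [← ENNReal.tsum_mul_left]
    refine tsum_congr fun k => ?_
    rw [Fin.prod_univ_succ]
    simp [Fin.consEquiv]

lemma tsum_choose_geom (a : ℝ≥0∞) (k : ℕ) :
    ∑' n : ℕ, ((n + k).choose k : ℝ≥0∞) * a ^ n = ((1 - a)⁻¹) ^ (k + 1) := by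
  induction k with
  | zero => simp [ENNReal.tsum_geometric]
  | succ k ih =>
    rw [pow_succ, ← ih, ← ENNReal.tsum_geometric, ← ENNReal.tsum_mul_right]
    have : ∀ i : ℕ, ((i + k).choose k : ℝ≥0∞) * a ^ i * ∑' n : ℕ, a ^ n
        = ∑' n : ℕ, ((i + k).choose k : ℝ≥0∞) * a ^ (i + n) := by
      intro i
      rw [← ENNReal.tsum_mul_left]
      exact tsum_congr fun n => by ring
    simp_rw [this]
    rw [← ENNReal.tsum_prod (f := fun i n : ℕ => ((i + k).choose k : ℝ≥0∞) * a ^ (i + n)),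
      ← (Finset.HasAntidiagonal.sigmaAntidiagonalEquivProd (A := ℕ)).tsum_eq, ENNReal.tsum_sigma']
    refine tsum_congr fun n => ?_
    rw [tsum_fintype]
    simp only [Finset.HasAntidiagonal.sigmaAntidiagonalEquivProd_apply]
    have h2 : ∀ x : antidiagonal n, ((x.1.1 + k).choose k : ℝ≥0∞) * a ^ (x.1.1 + x.1.2)
       = ((x.1.1 + k).choose k : ℝ≥0∞) * a ^ n := by
      intro x; rw [Finset.HasAntidiagonal.mem_antidiagonal.1 x.2]
    simp_rw [h2]
    rw [← Finset.sum_mul, Finset.sum_coe_sort (antidiagonal n)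
      (fun x => ((x.1 + k).choose k : ℝ≥0∞)), Finset.Nat.sum_antidiagonal_eq_sum_range_succ_mk]
    congr 1
    have := Nat.sum_range_add_choose n k
    rw [show n + (k+1) = n + k + 1 by ring, ← this]
    push_cast; rfl

lemma elim_one {r : ℕ} (a : ℝ≥0∞) (M : MvPolynomial (Fin r) ℝ≥0∞)
    (F : (MvPolynomial (Fin r) ℝ≥0∞)[X]) (m : Fin r →₀ ℕ) :
    ∑' d : ℕ, MvPolynomial.coeff m ((F * (C (MvPolynomial.C a) * X + C M) ^ d).coeff d)
     = (1 - a)⁻¹ * MvPolynomial.coeff m (F.eval (MvPolynomial.C ((1 - a)⁻¹) * M)) := by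
  induction F using Polynomial.induction_on' with
  | add p q hp hq =>
    simp only [add_mul, coeff_add, MvPolynomial.coeff_add, eval_add, mul_add, ENNReal.tsum_add, hp, hq]
  | monomial k s =>
    have h1 : ∀ d, d < k → MvPolynomial.coeff m ((monomial k s * (C (MvPolynomial.C a) * X + C M) ^ d).coeff d) = 0 := by
      intro d hd
      rw [← C_mul_X_pow_eq_monomial, mul_assoc, coeff_C_mul, mul_comm (X ^ k), coeff_mul_X_pow']
      simp [Nat.not_le.2 hd]
    rw [← (ENNReal.summable).sum_add_tsum_nat_add' (k := k), Finset.sum_eq_zero, zero_add]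
    · have h2 : ∀ n, MvPolynomial.coeff m ((monomial k s * (C (MvPolynomial.C a) * X + C M) ^ (n + k)).coeff (n + k))
         = MvPolynomial.coeff m (s * M ^ k) * (((n + k).choose k : ℝ≥0∞) * a ^ n) := by
        intro n
        rw [← C_mul_X_pow_eq_monomial, mul_assoc, coeff_C_mul, mul_comm (X ^ k), coeff_mul_X_pow]
        rw [add_pow, finsetSum_coeff, Finset.sum_eq_single n]
        · have : (C (MvPolynomial.C a) * X) ^ n * C M ^ (n + k - n) * (((n + k).choose n : ℕ) : (MvPolynomial (Fin r) ℝ≥0∞)[X])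
             = C (MvPolynomial.C (((n + k).choose k : ℝ≥0∞) * a ^ n) * M ^ k) * X ^ n := by
            rw [Nat.add_sub_cancel_left, Nat.choose_symm_add]
            simp only [map_mul, map_pow, map_natCast]
            ring
          rw [this, coeff_C_mul, coeff_X_pow_self, mul_one, mul_left_comm, MvPolynomial.coeff_C_mul, mul_comm]
        · intro b _ hb
          rw [mul_pow, ← C_pow, ← C_pow, mul_assoc, mul_assoc, coeff_C_mul, mul_comm (X ^ b), mul_assoc, coeff_C_mul,
            ← C_eq_natCast, coeff_C_mul, coeff_X_pow, if_neg (Ne.symm hb)]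
          simp
        · intro h; exact absurd (Finset.mem_range.2 (by omega)) h
      simp_rw [h2]
      rw [ENNReal.tsum_mul_left, tsum_choose_geom, eval_monomial, mul_pow, mul_left_comm, ← MvPolynomial.C_pow,
        MvPolynomial.coeff_C_mul]
      ring
    · intro d hd; exact h1 d (Finset.mem_range.1 hd)

noncomputable def MM {r : ℕ} (A : Fin r → Fin r → ℝ≥0∞) : ℝ≥0∞ :=
  ∑' d : Fin r → ℕ, MvPolynomial.coeff (Finsupp.equivFunOnFinite.symm d)
    (∏ i, (∑ j, MvPolynomial.C (A i j) * MvPolynomial.X j) ^ (d i))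

lemma MM_zero (A : Fin 0 → Fin 0 → ℝ≥0∞) : MM A = 1 := by
  simp only [MM, Finset.univ_eq_empty, Finset.prod_empty]
  rw [tsum_eq_single default (by intro b hb; exact absurd (Subsingleton.elim _ _) hb)]
  rw [show (Finsupp.equivFunOnFinite.symm (default : Fin 0 → ℕ)) = 0 from Subsingleton.elim _ _]
  simp

lemma MM_succ {r : ℕ} (A : Fin (r+1) → Fin (r+1) → ℝ≥0∞) :
    MM A = (1 - A 0 0)⁻¹ *
      MM (fun i j : Fin r => A i.succ j.succ + A i.succ 0 * A 0 j.succ * (1 - A 0 0)⁻¹) := by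
  unfold MM
  rw [← (Fin.consEquiv (fun _ : Fin (r+1) => ℕ)).tsum_eq, ENNReal.tsum_prod', ENNReal.tsum_comm,
    ← ENNReal.tsum_mul_left]
  refine tsum_congr fun d => ?_
  have key : ∀ d0 : ℕ, MvPolynomial.coeff
      (Finsupp.equivFunOnFinite.symm ((Fin.consEquiv fun _ => ℕ) (d0, d)))
      (∏ i, (∑ j, MvPolynomial.C (A i j) * MvPolynomial.X j) ^ (Fin.consEquiv (fun _ => ℕ)) (d0, d) i)
      = MvPolynomial.coeff (Finsupp.equivFunOnFinite.symm d)
        (((∏ i : Fin r, (C (MvPolynomial.C (A i.succ 0)) * X +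
            C (∑ j : Fin r, MvPolynomial.C (A i.succ j.succ) * MvPolynomial.X j)) ^ d i) *
          (C (MvPolynomial.C (A 0 0)) * X +
            C (∑ j : Fin r, MvPolynomial.C (A 0 j.succ) * MvPolynomial.X j)) ^ d0).coeff d0) := by
    intro d0
    have e1 : Finsupp.equivFunOnFinite.symm ((Fin.consEquiv fun _ => ℕ) (d0, d))
       = (Finsupp.equivFunOnFinite.symm d).cons d0 := by
      ext i
      refine Fin.cases ?_ (fun j => ?_) i
      · simp [Fin.consEquiv]
      · simp [Fin.consEquiv]
    rw [e1, ← MvPolynomial.finSuccEquiv_coeff_coeff]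
    congr 2
    rw [map_prod, Fin.prod_univ_succ, mul_comm]
    simp [Fin.consEquiv, Fin.sum_univ_succ, MvPolynomial.finSuccEquiv_X_zero, MvPolynomial.finSuccEquiv_X_succ, map_sum]
    have hC : ∀ a : ℝ≥0∞, MvPolynomial.finSuccEquiv ℝ≥0∞ r (MvPolynomial.C a) = C (MvPolynomial.C a) := fun a => by
      simp [MvPolynomial.finSuccEquiv_apply]
    simp only [hC]
  simp_rw [key]
  rw [elim_one]
  congr 2
  rw [eval_prod]
  refine Finset.prod_congr rfl fun i _ => ?_
  rw [eval_pow]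
  congr 1
  simp only [eval_add, eval_mul, eval_C, eval_X, map_add, map_mul, add_mul, Finset.sum_add_distrib, Finset.mul_sum]
  rw [add_comm]
  congr 1
  refine Finset.sum_congr rfl fun j _ => ?_
  ring

open Polynomial Finset
open scoped ENNReal

noncomputable def Svec (t : ℝ) : ∀ {r : ℕ}, (Fin r → ℝ) → ℝ
  | 0, _ => 0
  | _ + 1, x => x 0 + (1 - x 0) / (1 - t * x 0) * Svec t (fun i => x i.succ)

lemma Svec_succ (t : ℝ) {r : ℕ} (x : Fin (r+1) → ℝ) :
    Svec t x = x 0 + (1 - x 0) / (1 - t * x 0) * Svec t (fun i => x i.succ) := rfl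

noncomputable def Ak (t k : ℝ) {r : ℕ} (x : Fin r → ℝ) (i j : Fin r) : ℝ :=
  if i < j then (1 + k) * (x j / (1 - x j)) else if i = j then k * (x j / (1 - x j))
  else t * x j / (1 - t * x j) + k * (x j / (1 - x j))

lemma Svec_nonneg {t : ℝ} (ht0 : 0 ≤ t) (ht1 : t < 1) : ∀ {r : ℕ} (x : Fin r → ℝ), (∀ i, 0 ≤ x i) → (∀ i, x i < 1) →
    0 ≤ Svec t x := by
  intro r
  induction r with
  | zero => intro x _ _; exact le_refl _
  | succ r ih =>
    intro x h0 h1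
    have := ih (fun i => x i.succ) (fun i => h0 _) (fun i => h1 _)
    have a := h0 0
    have b := h1 0
    have c : 0 < 1 - t * x 0 := by nlinarith
    rw [Svec_succ]
    have : 0 ≤ (1 - x 0) / (1 - t * x 0) := div_nonneg (by linarith) c.le
    positivity

lemma MM_closed {t : ℝ} (ht0 : 0 ≤ t) (ht1 : t < 1) : ∀ {r : ℕ} (x : Fin r → ℝ), (∀ i, 0 ≤ x i) → (∀ i, x i < 1) →
    ∀ k : ℝ, 0 ≤ k → (1 + k) * Svec t x < 1 →
    (∏ b, ENNReal.ofReal (1 / (1 - x b))) * MM (fun i j => ENNReal.ofReal (Ak t k x i j))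
      = ENNReal.ofReal (1 / (1 - (1 + k) * Svec t x)) := by
  intro r
  induction r with
  | zero => intro x _ _ k _ _; simp [MM_zero, Svec]
  | succ r ih =>
    intro x h0 h1 k hk hS
    have hS' := Svec_nonneg ht0 ht1 (fun i : Fin r => x i.succ) (fun i => h0 _) (fun i => h1 _)
    have a := h0 0
    have b := h1 0
    have c : 0 < 1 - t * x 0 := by nlinarith
    have b' : 0 < 1 - x 0 := by linarith
    rw [Svec_succ] at hS
    set S' := Svec t (fun i : Fin r => x i.succ) with hS'def
    have hP : 0 ≤ (1 - x 0) / (1 - t * x 0) := div_nonneg (by linarith) c.le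
    have hKx : 0 < 1 - (1 + k) * x 0 := by
      have : 0 ≤ (1 + k) * ((1 - x 0) / (1 - t * x 0) * S') := by positivity
      nlinarith
    set k' : ℝ := (1 + k) * (1 - x 0) / ((1 - t * x 0) * (1 - (1 + k) * x 0)) - 1 with hk'
    have key : 1 - (1 + k) * (x 0 + (1 - x 0) / (1 - t * x 0) * S') = (1 - (1 + k) * x 0) * (1 - (1 + k') * S') := by
      rw [hk']; field_simp; ring
    have hk'0 : 0 ≤ k' := by
      rw [hk', sub_nonneg, le_div_iff₀ (by positivity)]
      have : 0 ≤ t * x 0 := by positivity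
      nlinarith [mul_nonneg hk a, mul_nonneg this hKx.le]
    have hS'1 : (1 + k') * S' < 1 := by
      have : 0 < (1 - (1 + k) * x 0) * (1 - (1 + k') * S') := by rw [← key]; linarith
      have := pos_of_mul_pos_right this hKx.le
      linarith
    have ihh := ih (fun i => x i.succ) (fun i => h0 _) (fun i => h1 _) k' hk'0 hS'1
    rw [MM_succ, Fin.prod_univ_succ]
    have d : 1 - k * (x 0 / (1 - x 0)) = (1 - (1 + k) * x 0) / (1 - x 0) := by
      field_simp; ring
    have dpos : 0 < (1 - (1 + k) * x 0) / (1 - x 0) := by positivity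
    have e0 : (1 - ENNReal.ofReal (Ak t k x 0 0))⁻¹ = ENNReal.ofReal ((1 - x 0) / (1 - (1 + k) * x 0)) := by
      have : Ak t k x 0 0 = k * (x 0 / (1 - x 0)) := by simp [Ak]
      rw [this, ← ENNReal.ofReal_one, ← ENNReal.ofReal_sub _ (by positivity), d,
        ← ENNReal.ofReal_inv_of_pos dpos, inv_div]
    have e1 : (fun i j : Fin r => ENNReal.ofReal (Ak t k x i.succ j.succ) + ENNReal.ofReal (Ak t k x i.succ 0) *
        ENNReal.ofReal (Ak t k x 0 j.succ) * (1 - ENNReal.ofReal (Ak t k x 0 0))⁻¹)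
        = fun i j : Fin r => ENNReal.ofReal (Ak t k' (fun i => x i.succ) i j) := by
      funext i j
      have aj := h0 j.succ
      have bj := h1 j.succ
      have cj : 0 < 1 - t * x j.succ := by nlinarith
      have bj' : 0 < 1 - x j.succ := by linarith
      have q1 : Ak t k x i.succ 0 = t * x 0 / (1 - t * x 0) + k * (x 0 / (1 - x 0)) := by
        simp [Ak, Fin.succ_ne_zero]
      have q2 : Ak t k x 0 j.succ = (1 + k) * (x j.succ / (1 - x j.succ)) := by
        simp [Ak, Fin.succ_pos]
      have q3 : Ak t k x i.succ j.succ = Ak t k (fun i => x i.succ) i j := by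
        simp [Ak]
      have q4 : 0 ≤ Ak t k (fun i => x i.succ) i j := by
        unfold Ak
        dsimp only
        split_ifs <;> positivity
      rw [e0, q1, q2, q3, ← ENNReal.ofReal_mul (by positivity), ← ENNReal.ofReal_mul (by positivity),
        ← ENNReal.ofReal_add q4 (by positivity)]
      congr 1
      have : (t * x 0 / (1 - t * x 0) + k * (x 0 / (1 - x 0))) * (1 + k) * ((1 - x 0) / (1 - (1 + k) * x 0))
         = k' - k := by
        have h1' : 1 - x 0 * (1 + k) ≠ 0 := by rw [mul_comm]; exact hKx.ne'
        have h2' : 1 - x 0 - x 0 * k ≠ 0 := by convert h1' using 1; ring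
        rw [hk']; field_simp; ring
      have e : (t * x 0 / (1 - t * x 0) + k * (x 0 / (1 - x 0))) * ((1 + k) * (x j.succ / (1 - x j.succ))) *
          ((1 - x 0) / (1 - (1 + k) * x 0)) = (k' - k) * (x j.succ / (1 - x j.succ)) := by
        rw [← this]; ring
      rw [e]
      unfold Ak
      dsimp only
      split_ifs <;> ring
    rw [e1, e0, Svec_succ, ← hS'def, key, mul_mul_mul_comm, ihh, ← hS'def, ← ENNReal.ofReal_mul (by positivity), ← ENNReal.ofReal_mul (by positivity)]
    congr 1
    have : 0 < 1 - (1 + k') * S' := by linarith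
    field_simp

open Polynomial Finset
open scoped ENNReal

lemma tsum_lists {r : ℕ} {β : Type} (G : (Fin r → List β) → ℝ≥0∞) :
    ∑' α : Fin r → ℕ, ∑' s : (∀ b, Fin (α b) → β), G (fun b => List.ofFn (s b)) = ∑' l : Fin r → List β, G l := by
  rw [← ENNReal.tsum_sigma (f := fun (α : Fin r → ℕ) (s : ∀ b, Fin (α b) → β) => G (fun b => List.ofFn (s b)))]
  let e1 : (Σ α : Fin r → ℕ, ∀ b, Fin (α b) → β) ≃ (Fin r → Σ n, Fin n → β) :=
    ⟨fun p b => ⟨p.1 b, p.2 b⟩, fun f => ⟨fun b => (f b).1, fun b => (f b).2⟩, fun _ => rfl, fun _ => rfl⟩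
  let e2 : (Fin r → Σ n, Fin n → β) ≃ (Fin r → List β) := Equiv.piCongrRight fun _ => List.equivSigmaTuple.symm
  rw [← (e1.trans e2).tsum_eq]
  rfl

lemma count_ofFn' {r : ℕ} : ∀ {n : ℕ} (s : Fin n → Fin r) (c : Fin r), (List.ofFn s).count c = #{k | s k = c} := by
  intro n
  induction n with
  | zero => intro s c; simp
  | succ n ih =>
    intro s c
    rw [List.ofFn_succ, List.count_cons, ih, Fin.card_filter_univ_succ]
    simp only [beq_iff_eq, Function.comp]
    split_ifs <;> simp

lemma prod_monomial' {σ ι : Type} {R : Type} [CommSemiring R] (S : Finset ι) (f : ι → σ →₀ ℕ) (g : ι → R) :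
    ∏ i ∈ S, MvPolynomial.monomial (f i) (g i) = MvPolynomial.monomial (∑ i ∈ S, f i) (∏ i ∈ S, g i) := by
  classical
  induction S using Finset.induction_on with
  | empty => simp
  | insert a S ha ih => rw [Finset.prod_insert ha, Finset.sum_insert ha, Finset.prod_insert ha, ih, MvPolynomial.monomial_mul]

/-- coefficient expansion -/
lemma MM_lists {r : ℕ} (A : Fin r → Fin r → ℝ≥0∞) :
    MM A = ∑' l : Fin r → List (Fin r), (if ∀ c, ∑ a, (l a).count c = (l c).length then
      ∏ a, ((l a).map (A a)).prod else 0) := by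
  rw [← tsum_lists]
  unfold MM
  refine tsum_congr fun d => ?_
  rw [tsum_fintype]
  have h1 : ∏ i, (∑ j, MvPolynomial.C (A i j) * MvPolynomial.X j) ^ (d i)
     = ∑ s : (∀ b, Fin (d b) → Fin r), MvPolynomial.monomial (∑ a, ∑ k, Finsupp.single (s a k) 1) (∏ a, ∏ k, A a (s a k)) := by
    simp_rw [Fintype.sum_pow]
    rw [Finset.prod_univ_sum, Fintype.piFinset_univ]
    refine Finset.sum_congr rfl fun s _ => ?_
    simp_rw [MvPolynomial.C_mul_X_eq_monomial, prod_monomial']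
  rw [h1, MvPolynomial.coeff_sum]
  refine Finset.sum_congr rfl fun s _ => ?_
  rw [MvPolynomial.coeff_monomial]
  have h2 : (∑ a, ∑ k, Finsupp.single (s a k) 1 = Finsupp.equivFunOnFinite.symm d) ↔
     (∀ c, ∑ a, (List.ofFn (s a)).count c = (List.ofFn (s c)).length) := by
    rw [Finsupp.ext_iff]
    refine forall_congr' fun c => ?_
    simp [Finsupp.finsetSum_apply, Finsupp.single_apply, count_ofFn']
  simp only [h2, List.map_ofFn, List.prod_ofFn, Function.comp]

noncomputable def wtL {r : ℕ} (x : Fin r → ℝ≥0∞) (t : ℝ≥0∞) (b : Fin r) (p : ℕ) : ℕ → List (Fin r) → ℝ≥0∞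
  | _, [] => 1
  | k, c :: l => if c = b then x b * (if p < k then t else 1) * wtL x t b p k l else
      x c * (if c < b then t else 1) * wtL x t b p (k+1) l

lemma wtL_replicate {r : ℕ} (x : Fin r → ℝ≥0∞) (t : ℝ≥0∞) (b : Fin r) (p k m : ℕ) (l : List (Fin r)) :
    wtL x t b p k (List.replicate m b ++ l) = (x b * (if p < k then t else 1)) ^ m * wtL x t b p k l := by
  induction m with
  | zero => simp
  | succ m ih => rw [List.replicate_succ, List.cons_append, wtL, if_pos rfl, ih]; ring

lemma wtL_cons_ne {r : ℕ} (x : Fin r → ℝ≥0∞) (t : ℝ≥0∞) (b : Fin r) (p k : ℕ) (c : Fin r) (hc : c ≠ b) (l : List (Fin r)) :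
    wtL x t b p k (c :: l) = x c * (if c < b then t else 1) * wtL x t b p (k+1) l := by
  rw [wtL, if_neg hc]

noncomputable def JJ {r : ℕ} (x : Fin r → ℝ≥0∞) (t : ℝ≥0∞) (b : Fin r) (p k : ℕ) (l' : List (Fin r)) : ℝ≥0∞ :=
  ∑' l : List (Fin r), if l.filter (fun c => decide (c ≠ b)) = l' then wtL x t b p k l else 0

lemma JJ_nil {r : ℕ} (x : Fin r → ℝ≥0∞) (t : ℝ≥0∞) (b : Fin r) (p k : ℕ) :
    JJ x t b p k [] = (1 - x b * (if p < k then t else 1))⁻¹ := by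
  unfold JJ
  have hinj : Function.Injective (fun m => List.replicate m b) := fun m m' h => by
    have := congrArg List.length h; simpa using this
  rw [← hinj.tsum_eq, ← ENNReal.tsum_geometric]
  · refine tsum_congr fun m => ?_
    have := wtL_replicate x t b p k m []
    rw [List.append_nil] at this
    rw [this, if_pos]
    · simp [wtL]
    · simp
  · intro l hl
    rw [Function.mem_support] at hl
    have : l.filter (fun c => decide (c ≠ b)) = [] := by by_contra h; exact hl (if_neg h)
    rw [List.filter_eq_nil_iff] at this
    refine ⟨l.length, ?_⟩
    symm
    rw [List.eq_replicate_iff]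
    exact ⟨rfl, fun c hc => by simpa using this c hc⟩

lemma JJ_cons {r : ℕ} (x : Fin r → ℝ≥0∞) (t : ℝ≥0∞) (b : Fin r) (p k : ℕ) (c : Fin r) (hc : c ≠ b) (l' : List (Fin r)) :
    JJ x t b p k (c :: l') = (1 - x b * (if p < k then t else 1))⁻¹ * (x c * (if c < b then t else 1)) * JJ x t b p (k+1) l' := by
  unfold JJ
  have hinj : Function.Injective (fun z : ℕ × List (Fin r) => List.replicate z.1 b ++ c :: z.2) := by
    rintro ⟨m, l⟩ ⟨m', l2⟩ h
    dsimp only at h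
    induction m generalizing m' with
    | zero =>
      cases m' with
      | zero => simp at h; simp [h]
      | succ m' => simp [List.replicate_succ] at h; exact absurd h.1 hc
    | succ m ih =>
      cases m' with
      | zero => simp [List.replicate_succ] at h; exact absurd h.1.symm hc
      | succ m' =>
        simp only [List.replicate_succ, List.cons_append, List.cons.injEq, true_and] at h
        have := ih m' h
        simp only [Prod.mk.injEq] at this ⊢
        exact ⟨by omega, this.2⟩
  rw [← hinj.tsum_eq, ← ENNReal.tsum_geometric, ENNReal.tsum_prod', ← ENNReal.tsum_mul_right, ← ENNReal.tsum_mul_right]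
  · refine tsum_congr fun m => ?_
    rw [← ENNReal.tsum_mul_left]
    refine tsum_congr fun l => ?_
    rw [wtL_replicate, wtL_cons_ne _ _ _ _ _ _ hc]
    have : (List.replicate m b ++ c :: l).filter (fun c => decide (c ≠ b)) = c :: l.filter (fun c => decide (c ≠ b)) := by
      simp [hc]
    rw [this]
    simp only [List.cons.injEq, true_and]
    split_ifs <;> ring
  · intro l hl
    rw [Function.mem_support] at hl
    have : l.filter (fun c => decide (c ≠ b)) = c :: l' := by by_contra h; exact hl (if_neg h)
    rw [List.filter_eq_cons_iff] at this
    obtain ⟨l1, l2, rfl, h1, h2, h3⟩ := this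
    refine ⟨(l1.length, l2), ?_⟩
    dsimp only
    congr 1
    symm
    rw [List.eq_replicate_iff]
    exact ⟨rfl, fun c hc => by simpa using h1 c hc⟩

lemma JJ_mem {r : ℕ} (x : Fin r → ℝ≥0∞) (t : ℝ≥0∞) (b : Fin r) (p k : ℕ) (l' : List (Fin r)) (h : b ∈ l') :
    JJ x t b p k l' = 0 := by
  unfold JJ
  rw [ENNReal.tsum_eq_zero]
  intro l
  rw [if_neg]
  rintro rfl
  simp at h

lemma JJ_eq {r : ℕ} (x : Fin r → ℝ≥0∞) (t : ℝ≥0∞) (b : Fin r) (p : ℕ) (l' : List (Fin r)) (h : b ∉ l') (k : ℕ) :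
    JJ x t b p k l' = (∏ i ∈ Finset.range (l'.length + 1), (1 - x b * (if p < k + i then t else 1))⁻¹) *
      (l'.map (fun c => x c * (if c < b then t else 1))).prod := by
  induction l' generalizing k with
  | nil => simp [JJ_nil]
  | cons c l ih =>
    rw [List.mem_cons, not_or] at h
    rw [JJ_cons _ _ _ _ _ _ (Ne.symm h.1), ih h.2, List.length_cons, Finset.prod_range_succ' _ (l.length + 1)]
    simp only [List.map_cons, List.prod_cons, add_zero, add_assoc, add_comm 1]
    ring

lemma JJ_eq0 {r : ℕ} (x : Fin r → ℝ≥0∞) (t : ℝ≥0∞) (b : Fin r) (p m : ℕ) (l' : List (Fin r)) (h : b ∉ l') (hp : l'.length = p + m) :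
    JJ x t b p 0 l' = (1 - x b)⁻¹ * ((1 - x b)⁻¹ ^ p * (1 - x b * t)⁻¹ ^ m) *
      (l'.map (fun c => x c * (if c < b then t else 1))).prod := by
  rw [JJ_eq _ _ _ _ _ h, hp, show p + m + 1 = (p + 1) + m by ring, Finset.prod_range_add]
  congr 1
  rw [Finset.prod_congr rfl (g := fun _ => (1 - x b)⁻¹), Finset.prod_congr rfl (s₁ := range m) (g := fun _ => (1 - x b * t)⁻¹)]
  · simp; ring
  · intro i _; rw [if_pos (by omega)]
  · intro i hi; rw [if_neg (by have := Finset.mem_range.1 hi; omega)]; simp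

open Polynomial Finset
open scoped ENNReal

def BalL {r : ℕ} (l : Fin r → List (Fin r)) : Prop := ∀ c, ∑ a, (l a).count c = (l c).length
instance {r : ℕ} (l : Fin r → List (Fin r)) : Decidable (BalL l) :=
  inferInstanceAs (Decidable (∀ c, ∑ a, (l a).count c = (l c).length))

def ppL {r : ℕ} (l : Fin r → List (Fin r)) (b : Fin r) : ℕ := ∑ a with a < b, (l a).count b

def filL {r : ℕ} (l : Fin r → List (Fin r)) : Fin r → List (Fin r) :=
  fun b => (l b).filter (fun c => decide (c ≠ b))

lemma count_filL {r : ℕ} (l : Fin r → List (Fin r)) (a c : Fin r) :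
    (filL l a).count c = if a = c then 0 else (l a).count c := by
  unfold filL
  split_ifs with h
  · subst h; rw [List.count_eq_zero]; simp
  · rw [List.count_filter]; simpa using (Ne.symm h)

lemma ppL_filL {r : ℕ} (l : Fin r → List (Fin r)) (b : Fin r) : ppL (filL l) b = ppL l b := by
  unfold ppL
  refine Finset.sum_congr rfl fun a ha => ?_
  rw [count_filL, if_neg (Finset.mem_filter.1 ha).2.ne]

lemma length_filL {r : ℕ} (l : Fin r → List (Fin r)) (b : Fin r) : (filL l b).length + (l b).count b = (l b).length := by
  unfold filL
  have := List.length_eq_length_filter_add (l := l b) (fun c => decide (c ≠ b))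
  rw [this, List.count, List.countP_eq_length_filter]
  congr 2
  refine List.filter_congr fun c _ => ?_
  by_cases h : c = b <;> simp [h]

lemma BalL_filL {r : ℕ} (l : Fin r → List (Fin r)) : BalL (filL l) ↔ BalL l := by
  unfold BalL
  refine forall_congr' fun c => ?_
  have h1 := length_filL l c
  have h2 : ∑ a, (filL l a).count c + (l c).count c = ∑ a, (l a).count c := by
    rw [← Finset.add_sum_erase _ _ (Finset.mem_univ c), ← Finset.add_sum_erase (a := c) univ (fun a => (l a).count c) (Finset.mem_univ c),
      count_filL, if_pos rfl, zero_add, add_comm]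
    congr 1
    refine Finset.sum_congr rfl fun a ha => ?_
    rw [count_filL, if_neg (Finset.ne_of_mem_erase ha)]
  omega

noncomputable def A0 {r : ℕ} (x : Fin r → ℝ≥0∞) (t : ℝ≥0∞) (a c : Fin r) : ℝ≥0∞ :=
  if a < c then x c * (1 - x c)⁻¹ else if a = c then 0 else x c * t * (1 - x c * t)⁻¹

lemma prod_map_eq_prod_pow {r : ℕ} (l : List (Fin r)) (f : Fin r → ℝ≥0∞) :
    (l.map f).prod = ∏ c, f c ^ l.count c := by
  exact Finset.prod_list_map_count l f |>.trans (Finset.prod_subset (Finset.subset_univ _) (by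
    intro c _ hc
    rw [List.mem_toFinset] at hc
    rw [List.count_eq_zero.2 hc, pow_zero]))

lemma stepA_term {r : ℕ} (x : Fin r → ℝ≥0∞) (t : ℝ≥0∞) (l : Fin r → List (Fin r)) (hl : BalL l) :
    ∏ b, JJ x t b (ppL l b) 0 (l b) = (∏ b, (1 - x b)⁻¹) * ∏ a, ((l a).map (A0 x t a)).prod := by
  by_cases hd : ∃ b, b ∈ l b
  · obtain ⟨b, hb⟩ := hd
    rw [Finset.prod_eq_zero (Finset.mem_univ b) (JJ_mem _ _ _ _ _ _ hb)]
    rw [Finset.prod_eq_zero (s := univ) (f := fun a => ((l a).map (A0 x t a)).prod) (Finset.mem_univ b), mul_zero]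
    rw [List.prod_eq_zero_iff, List.mem_map]
    exact ⟨b, hb, by simp [A0]⟩
  · push Not at hd
    have hlen : ∀ b, (l b).length = ppL l b + ∑ a with b < a, (l a).count b := by
      intro b
      rw [← hl b, ppL, Finset.sum_filter, Finset.sum_filter, ← Finset.sum_add_distrib]
      refine Finset.sum_congr rfl fun a _ => ?_
      rcases lt_trichotomy a b with h | h | h
      · simp [h, h.asymm]
      · subst h; simp [List.count_eq_zero.2 (hd a)]
      · simp [h, h.asymm]
    rw [Finset.prod_congr rfl (fun b _ => JJ_eq0 x t b _ _ (l b) (hd b) (hlen b))]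
    simp only [Finset.prod_mul_distrib]
    rw [mul_assoc]
    congr 1
    have e1 : ∀ b, (1 - x b)⁻¹ ^ ppL l b = ∏ a, (if a < b then (1 - x b)⁻¹ ^ (l a).count b else 1) := by
      intro b; rw [ppL, ← Finset.prod_pow_eq_pow_sum, Finset.prod_filter]
    have e2 : ∀ b, (1 - x b * t)⁻¹ ^ (∑ a with b < a, (l a).count b) = ∏ a, (if b < a then (1 - x b * t)⁻¹ ^ (l a).count b else 1) := by
      intro b; rw [← Finset.prod_pow_eq_pow_sum, Finset.prod_filter]
    simp only [e1, e2]
    rw [Finset.prod_comm, Finset.prod_comm (f := fun b a => (if b < a then (1 - x b * t)⁻¹ ^ (l a).count b else 1))]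
    rw [← Finset.prod_mul_distrib, ← Finset.prod_mul_distrib]
    refine Finset.prod_congr rfl fun a _ => ?_
    rw [prod_map_eq_prod_pow, prod_map_eq_prod_pow, ← Finset.prod_mul_distrib, ← Finset.prod_mul_distrib]
    refine Finset.prod_congr rfl fun c _ => ?_
    rcases lt_trichotomy a c with h | h | h
    · simp only [h, h.asymm, if_true, if_false, A0, mul_one]; rw [mul_pow]; ring
    · subst h; simp [List.count_eq_zero.2 (hd a)]
    · simp only [h, h.asymm, h.ne', if_true, if_false, A0, one_mul]; rw [mul_pow, mul_pow]; ring

lemma stepA {r : ℕ} (x : Fin r → ℝ≥0∞) (t : ℝ≥0∞) :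
    ∑' l : Fin r → List (Fin r), (if BalL l then ∏ b, wtL x t b (ppL l b) 0 (l b) else 0)
      = (∏ b, (1 - x b)⁻¹) * MM (A0 x t) := by
  have h1 : ∀ l : Fin r → List (Fin r), (if BalL l then ∏ b, wtL x t b (ppL l b) 0 (l b) else 0)
     = ∑' l' : Fin r → List (Fin r), (if filL l = l' then (if BalL l' then ∏ b, wtL x t b (ppL l' b) 0 (l b) else 0) else 0) := by
    intro l
    rw [tsum_eq_single (filL l)]
    · rw [if_pos rfl]
      simp only [BalL_filL, ppL_filL]
    · intro l' h; rw [if_neg (Ne.symm h)]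
  simp_rw [h1]
  rw [ENNReal.tsum_comm, MM_lists, ← ENNReal.tsum_mul_left]
  refine tsum_congr fun l' => ?_
  change _ = _ * (if BalL l' then _ else _)
  by_cases hb : BalL l'
  · simp only [hb, if_true]
    rw [← stepA_term x t l' hb]
    unfold JJ
    rw [← tsum_pi_prod]
    refine tsum_congr fun l => ?_
    by_cases hf : filL l = l'
    · rw [if_pos hf]
      refine Finset.prod_congr rfl fun b _ => ?_
      rw [if_pos]; rw [← hf]; rfl
    · rw [if_neg hf]
      obtain ⟨b, hb⟩ := Function.ne_iff.1 hf
      exact (Finset.prod_eq_zero (Finset.mem_univ b) (if_neg hb)).symm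
  · simp [hb]

lemma stepA_closed {r : ℕ} {t : ℝ} (ht0 : 0 ≤ t) (ht1 : t < 1) (x : Fin r → ℝ) (h0 : ∀ i, 0 ≤ x i) (h1 : ∀ i, x i < 1)
    (hS : Svec t x < 1) :
    ∑' l : Fin r → List (Fin r), (if BalL l then ∏ b, wtL (fun i => ENNReal.ofReal (x i)) (ENNReal.ofReal t) b (ppL l b) 0 (l b) else 0)
      = ENNReal.ofReal (1 / (1 - Svec t x)) := by
  rw [stepA]
  have := MM_closed ht0 ht1 x h0 h1 0 le_rfl (by simpa using hS)
  rw [add_zero, one_mul] at this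
  rw [← this]
  have hx : ∀ b, (1 - ENNReal.ofReal (x b))⁻¹ = ENNReal.ofReal (1 / (1 - x b)) := by
    intro b
    rw [← ENNReal.ofReal_one, ← ENNReal.ofReal_sub _ (h0 b), ← ENNReal.ofReal_inv_of_pos (by linarith [h1 b]), one_div]
  have hxt : ∀ b, (1 - ENNReal.ofReal (x b) * ENNReal.ofReal t)⁻¹ = ENNReal.ofReal (1 / (1 - t * x b)) := by
    intro b
    rw [← ENNReal.ofReal_one, ← ENNReal.ofReal_mul (h0 b), ← ENNReal.ofReal_sub _ (mul_nonneg (h0 b) ht0),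
      ← ENNReal.ofReal_inv_of_pos (by nlinarith [h1 b, h0 b]), one_div, mul_comm]
  simp_rw [hx]
  congr 2
  funext a c
  unfold A0 Ak
  rw [hx, hxt]
  split_ifs
  · rw [← ENNReal.ofReal_mul (h0 c)]; congr 1; ring
  · simp
  · rw [← ENNReal.ofReal_mul (h0 c), ← ENNReal.ofReal_mul (mul_nonneg (h0 c) ht0)]; congr 1; ring

open Polynomial Finset
open scoped ENNReal

def rkw {n : ℕ} {β : Type} [LinearOrder β] (w : Fin n → β) (j : Fin n) : ℕ :=
  #{j' | w j' < w j} + #{j' | j' < j ∧ w j' = w j}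

def excw {n : ℕ} {β : Type} [LinearOrder β] (w : Fin n → β) : ℕ := #{j : Fin n | rkw w j < j}

lemma pow_excw {n : ℕ} {β : Type} [LinearOrder β] (w : Fin n → β) (t : ℝ≥0∞) :
    t ^ excw w = ∏ j : Fin n, (if rkw w j < j then t else 1) := by
  rw [excw, ← Finset.prod_const, Finset.prod_filter]

/-- prefix sums -/
def stt {r : ℕ} (α : Fin r → ℕ) (b : Fin r) : ℕ := ∑ a with a < b, α a

lemma fsf_val {r : ℕ} (α : Fin r → ℕ) (b : Fin r) (i : Fin (α b)) :
    ((finSigmaFinEquiv ⟨b, i⟩ : Fin (∑ a, α a)) : ℕ) = stt α b + i := by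
  rw [finSigmaFinEquiv_apply, stt]
  congr 1
  refine Finset.sum_nbij (fun i => Fin.castLE b.2.le i) ?_ ?_ ?_ ?_
  · intro j _; simp only [Finset.mem_filter, Finset.mem_univ, true_and]; exact j.2
  · intro j _ j' _ h; simpa [Fin.ext_iff] using h
  · intro c hc
    have hc' : c < b := by simpa using hc
    exact ⟨⟨c, hc'⟩, by simp, by ext; simp⟩
  · intro j _; rfl

lemma stt_lt {r : ℕ} (α : Fin r → ℕ) {a b : Fin r} (h : a < b) : stt α a + α a ≤ stt α b := by
  unfold stt
  have : insert a (univ.filter (· < a)) ⊆ univ.filter (· < b) := by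
    intro c hc
    simp only [Finset.mem_insert, Finset.mem_filter, Finset.mem_univ, true_and] at hc ⊢
    rcases hc with rfl | hc
    · exact h
    · exact hc.trans h
  have h2 := Finset.sum_le_sum_of_subset (f := α) this
  rw [Finset.sum_insert (by simp)] at h2
  omega

def unseg {r : ℕ} (α : Fin r → ℕ) : (∀ b, Fin (α b) → Fin r) ≃ (Fin (∑ a, α a) → Fin r) :=
  (Equiv.piCurry (fun (b : Fin r) (_ : Fin (α b)) => Fin r)).symm.trans
    (Equiv.arrowCongr finSigmaFinEquiv (Equiv.refl _))

lemma unseg_apply {r : ℕ} (α : Fin r → ℕ) (s : ∀ b, Fin (α b) → Fin r) (b : Fin r) (i : Fin (α b)) :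
    unseg α s (finSigmaFinEquiv ⟨b, i⟩) = s b i := by
  have h : ∀ z : (Σ b, Fin (α b)), z = ⟨b, i⟩ → s z.1 z.2 = s b i := by rintro _ rfl; rfl
  exact h _ (finSigmaFinEquiv.symm_apply_apply _)

lemma card_unseg {r : ℕ} (α : Fin r → ℕ) (P : Fin (∑ a, α a) → Prop) [DecidablePred P] :
    #{k | P k} = ∑ b, #{i : Fin (α b) | P (finSigmaFinEquiv ⟨b, i⟩)} := by
  rw [Finset.card_filter, ← finSigmaFinEquiv.sum_comp, Fintype.sum_sigma]
  simp only [Finset.card_filter]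

lemma rk_unseg {r : ℕ} (α : Fin r → ℕ) (s : ∀ b, Fin (α b) → Fin r)
    (hc : ∀ c, #{k | unseg α s k = c} = α c) (b : Fin r) (i : Fin (α b)) :
    rkw (unseg α s) (finSigmaFinEquiv ⟨b, i⟩) < ((finSigmaFinEquiv ⟨b, i⟩ : Fin (∑ a, α a)) : ℕ) ↔
      (s b i < b ∨ (s b i = b ∧ (∑ a with a < b, #{i' | s a i' = b}) < #{i' | i' < i ∧ s b i' ≠ b})) := by
  have hlt : ∀ c, #{k | unseg α s k < c} = stt α c := by
    intro c
    refine Eq.trans ?_ (Finset.sum_congr rfl (fun a _ => hc a))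
    rw [Finset.card_eq_sum_card_fiberwise (f := unseg α s) (t := univ.filter (· < c))]
    · refine Finset.sum_congr rfl fun a ha => ?_
      congr 1
      ext k
      simp only [Finset.mem_filter, Finset.mem_univ, true_and, and_iff_right_iff_imp] at ha ⊢
      rintro rfl; exact ha
    · intro k hk; simpa using hk
  have hord : ∀ (a : Fin r) (i' : Fin (α a)), (finSigmaFinEquiv ⟨a, i'⟩ : Fin (∑ a, α a)) < finSigmaFinEquiv ⟨b, i⟩ ↔
      a < b ∨ (a = b ∧ (i' : ℕ) < i) := by
    intro a i'
    rw [Fin.lt_def, fsf_val, fsf_val]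
    rcases lt_trichotomy a b with h | h | h
    · have := stt_lt α h
      have := i'.2
      simp only [h, true_or, iff_true]; omega
    · subst h; simp
    · have := stt_lt α h
      have := i.2
      simp only [h.asymm, h.ne', false_or, false_and, iff_false]; omega
  have hi := i.2
  unfold rkw
  rw [hlt, unseg_apply, fsf_val]
  rcases lt_trichotomy (s b i) b with h | h | h
  · simp only [h, true_or, iff_true]
    have h1 := stt_lt α h
    have h2 : #{j' | j' < finSigmaFinEquiv ⟨b, i⟩ ∧ unseg α s j' = s b i} < α (s b i) := by
      rw [← hc (s b i)]
      apply Finset.card_lt_card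
      rw [Finset.ssubset_iff_of_subset]
      · exact ⟨finSigmaFinEquiv ⟨b, i⟩, by simp [unseg_apply], by simp⟩
      · intro k; simp only [Finset.mem_filter, Finset.mem_univ, true_and]; exact fun h => h.2
    omega
  · simp only [h, lt_irrefl, false_or, true_and]
    rw [card_unseg]
    simp only [hord, unseg_apply]
    rw [← Finset.sum_filter_add_sum_filter_not univ (· < b)]
    have e1 : ∑ a with a < b, #{i' : Fin (α a) | (a < b ∨ a = b ∧ (i' : ℕ) < i) ∧ s a i' = b} =
       ∑ a with a < b, #{i' | s a i' = b} := by
      refine Finset.sum_congr rfl fun a ha => ?_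
      have := (Finset.mem_filter.1 ha).2
      simp [this]
    have e2 : ∑ a with ¬ a < b, #{i' : Fin (α a) | (a < b ∨ a = b ∧ (i' : ℕ) < i) ∧ s a i' = b} =
       #{i' | i' < i ∧ s b i' = b} := by
      rw [Finset.sum_eq_single b]
      · simp
      · intro a ha hab
        have := (Finset.mem_filter.1 ha).2
        simp [this, hab]
      · simp
    rw [e1, e2]
    have e3 : #{i' | i' < i ∧ s b i' = b} + #{i' | i' < i ∧ s b i' ≠ b} = i := by
      rw [← Finset.filter_filter, ← Finset.filter_filter, Finset.card_filter_add_card_filter_not]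
      rw [show (univ.filter (fun i' => i' < i)) = Finset.Iio i by ext; simp, Fin.card_Iio]
    omega
  · simp only [h.asymm, h.ne', false_or, false_and, iff_false]
    have h1 := stt_lt α h
    omega

lemma wtL_ofFn {r : ℕ} (x : Fin r → ℝ≥0∞) (t : ℝ≥0∞) (b : Fin r) (p : ℕ) : ∀ {n : ℕ} (s : Fin n → Fin r) (k : ℕ),
    wtL x t b p k (List.ofFn s) = ∏ i, x (s i) * (if s i < b ∨ (s i = b ∧ p < k + #{i' | i' < i ∧ s i' ≠ b}) then t else 1) := by
  intro n
  induction n with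
  | zero => intro s k; simp [wtL]
  | succ n ih =>
    intro s k
    rw [List.ofFn_succ, wtL, Fin.prod_univ_succ, ih, ih]
    have hcard : ∀ i : Fin n, #{i' | i' < i.succ ∧ s i' ≠ b} = (if s 0 ≠ b then 1 else 0) + #{i' : Fin n | i' < i ∧ s i'.succ ≠ b} := by
      intro i
      rw [Fin.card_filter_univ_succ]
      simp only [Fin.succ_pos, true_and, Fin.succ_lt_succ_iff]
      split_ifs <;> simp [add_comm]
    simp only [hcard]
    by_cases h : s 0 = b
    · rw [if_pos h]; simp [h]
    · rw [if_neg h]; simp [h, add_assoc]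

lemma words_lists {r : ℕ} (x : Fin r → ℝ≥0∞) (t : ℝ≥0∞) :
    ∑' n : ℕ, ∑ w : Fin n → Fin r, (∏ j, x (w j)) * t ^ excw w
     = ∑' l : Fin r → List (Fin r), (if BalL l then ∏ b, wtL x t b (ppL l b) 0 (l b) else 0) := by
  have h1 : ∀ n : ℕ, ∑ w : Fin n → Fin r, (∏ j, x (w j)) * t ^ excw w
     = ∑' α : Fin r → ℕ, ∑ w : Fin n → Fin r, (if ∀ c, #{k | w k = c} = α c then (∏ j, x (w j)) * t ^ excw w else 0) := by
    intro n
    rw [Summable.tsum_finsetSum (fun _ _ => ENNReal.summable)]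
    refine Finset.sum_congr rfl fun w _ => ?_
    rw [tsum_eq_single (fun c => #{k | w k = c})]
    · simp
    · intro α h; rw [if_neg]; intro h'; exact h (funext fun c => (h' c).symm)
  simp_rw [h1]
  rw [ENNReal.tsum_comm, ← tsum_lists]
  refine tsum_congr fun α => ?_
  rw [tsum_eq_single (∑ a, α a), tsum_fintype, ← (unseg α).sum_comp]
  · refine Finset.sum_congr rfl fun s _ => ?_
    have hb : (∀ c, #{k | unseg α s k = c} = α c) ↔ BalL (fun b => List.ofFn (s b)) := by
      unfold BalL
      refine forall_congr' fun c => ?_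
      rw [card_unseg]
      simp only [unseg_apply, count_ofFn', List.length_ofFn]
    by_cases hc : ∀ c, #{k | unseg α s k = c} = α c
    · rw [if_pos hc, if_pos (hb.1 hc), pow_excw, ← Finset.prod_mul_distrib, ← finSigmaFinEquiv.prod_comp, Fintype.prod_sigma]
      refine Finset.prod_congr rfl fun b _ => ?_
      rw [wtL_ofFn]
      refine Finset.prod_congr rfl fun i _ => ?_
      simp only [rk_unseg α s hc, unseg_apply, ppL, count_ofFn', zero_add]
    · rw [if_neg hc, if_neg (fun h => hc (hb.2 h))]
  · intro n hn
    refine Finset.sum_eq_zero fun w _ => if_neg fun h => hn ?_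
    rw [← Finset.sum_congr rfl (fun a _ => h a), ← Finset.card_eq_sum_card_fiberwise]
    · simp
    · intro k _; simp

lemma words_closed {r : ℕ} {t : ℝ} (ht0 : 0 ≤ t) (ht1 : t < 1) (x : Fin r → ℝ) (h0 : ∀ i, 0 ≤ x i) (h1 : ∀ i, x i < 1)
    (hS : Svec t x < 1) :
    ∑' n : ℕ, ∑ w : Fin n → Fin r, (∏ j, ENNReal.ofReal (x (w j))) * ENNReal.ofReal t ^ excw w
      = ENNReal.ofReal (1 / (1 - Svec t x)) := by
  rw [words_lists (fun i => ENNReal.ofReal (x i)), stepA_closed ht0 ht1 x h0 h1 hS]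

open Polynomial Finset
open scoped ENNReal

def extf {n : ℕ} (f : Fin n → ℕ) (k : ℕ) : ℕ := if h : k < n then f ⟨k, h⟩ else 0

lemma extf_val {n : ℕ} (f : Fin n → ℕ) (i : Fin n) : extf f i = f i := by simp [extf]

lemma antif_sum (q : ℝ≥0∞) (n : ℕ) (δ : ℕ → ℕ) :
    ∑' f : Fin n → ℕ, (if ∀ i : Fin n, extf f (i + 1) + δ i ≤ f i then q ^ (∑ i, f i) else 0)
     = q ^ (∑ j ∈ range n, (j + 1) * δ j) * ∏ j ∈ range n, (1 - q ^ (j + 1))⁻¹ := by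
  let Φ : (Fin n → ℕ) → (Fin n → ℕ) := fun d i => ∑ j ∈ Finset.Ico (i : ℕ) n, (extf d j + δ j)
  have hΦ : ∀ d k, k ≤ n → extf (Φ d) k = ∑ j ∈ Finset.Ico k n, (extf d j + δ j) := by
    intro d k hk
    unfold extf
    split_ifs with h
    · rfl
    · rw [show k = n by omega]; simp
  have hstep : ∀ d (i : Fin n), Φ d i = d i + δ i + extf (Φ d) (i + 1) := by
    intro d i
    rw [hΦ d _ i.2]
    change ∑ j ∈ Finset.Ico (i : ℕ) n, (extf d j + δ j) = _
    rw [Finset.sum_eq_sum_Ico_succ_bot i.2, extf_val]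
  have hinj : Function.Injective Φ := by
    intro d d' h
    funext i
    have h1 := hstep d i
    have h2 := hstep d' i
    rw [h] at h1
    omega
  rw [← hinj.tsum_eq]
  · have h1 : ∀ d : Fin n → ℕ, (if ∀ i : Fin n, extf (Φ d) (i + 1) + δ i ≤ Φ d i then q ^ (∑ i, Φ d i) else 0)
       = q ^ (∑ j ∈ range n, (j + 1) * δ j) * ∏ j : Fin n, (q ^ ((j : ℕ) + 1)) ^ (d j) := by
      intro d
      rw [if_pos (fun i => by rw [hstep d i]; omega)]
      have : ∑ i, Φ d i = ∑ j ∈ range n, (j + 1) * δ j + ∑ j : Fin n, ((j : ℕ) + 1) * d j := by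
        have e1 : ∑ i, Φ d i = ∑ i ∈ Finset.Ico 0 n, ∑ j ∈ Finset.Ico i n, (extf d j + δ j) := by
          rw [← Finset.range_eq_Ico, Finset.sum_range]
        rw [e1, Finset.sum_Ico_Ico_comm]
        simp only [Finset.sum_const, Nat.card_Ico, smul_eq_mul, Nat.sub_zero, mul_add (_ + 1), Finset.sum_add_distrib]
        rw [← Finset.range_eq_Ico]
        rw [add_comm]
        congr 1
        rw [Finset.sum_range (fun j => (j+1) * extf d j)]
        simp only [extf_val]
      rw [this, pow_add]
      congr 1
      rw [← Finset.prod_pow_eq_pow_sum]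
      refine Finset.prod_congr rfl fun j _ => by rw [pow_mul]
    simp_rw [h1]
    rw [ENNReal.tsum_mul_left, tsum_pi_prod (fun (j : Fin n) (k : ℕ) => (q ^ ((j : ℕ) + 1)) ^ k)]
    simp_rw [ENNReal.tsum_geometric]
    rw [Finset.prod_range]
  · intro f hf
    rw [Function.mem_support] at hf
    have hc : ∀ i : Fin n, extf f (i + 1) + δ i ≤ f i := by by_contra h; exact hf (if_neg h)
    refine ⟨fun i => f i - extf f (i + 1) - δ i, ?_⟩
    set d : Fin n → ℕ := fun i => f i - extf f (i + 1) - δ i with hd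
    have key : ∀ m ≤ n, extf (Φ d) (n - m) = extf f (n - m) := by
      intro m
      induction m with
      | zero => intro _; simp [extf]
      | succ m ih =>
        intro hm
        have ihm := ih (by omega)
        have hlt : n - (m + 1) < n := by omega
        have h2 := hstep d ⟨n - (m+1), hlt⟩
        have h3 := hc ⟨n - (m+1), hlt⟩
        have h4 : n - (m + 1) + 1 = n - m := by omega
        simp only [h4] at h2 h3
        have h5 : extf (Φ d) (n - (m+1)) = Φ d ⟨n - (m+1), hlt⟩ := by simp [extf, hlt]
        have h6 : extf f (n - (m+1)) = f ⟨n - (m+1), hlt⟩ := by simp [extf, hlt]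
        have h7 : d ⟨n - (m+1), hlt⟩ = f ⟨n - (m+1), hlt⟩ - extf f (n - m) - δ (n - (m+1)) := by
          simp only [hd, h4]
        omega
    funext i
    have := key (n - i) (by omega)
    rw [show n - (n - (i : ℕ)) = i by omega, extf_val, extf_val] at this
    exact this

lemma rkw_sort {n : ℕ} {β : Type} [LinearOrder β] (g : Fin n → β) (j : Fin n) :
    rkw g j = ((Tuple.sort g).symm j : ℕ) := by
  obtain ⟨h1, h2⟩ := (Tuple.eq_sort_iff (f := g) (σ := Tuple.sort g)).1 rfl
  set σ := Tuple.sort g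
  obtain ⟨i, rfl⟩ := σ.surjective j
  rw [Equiv.symm_apply_apply]
  unfold rkw
  rw [← Finset.card_union_of_disjoint]
  · rw [← Fin.card_Iio i, ← Finset.card_map σ.toEmbedding (s := Finset.Iio i)]
    congr 1
    ext j'
    obtain ⟨i', rfl⟩ := σ.surjective j'
    simp only [Finset.mem_union, Finset.mem_filter, Finset.mem_univ, true_and, Finset.mem_map_equiv, Equiv.symm_apply_apply, Finset.mem_Iio]
    constructor
    · intro h
      by_contra hlt
      rcases (not_lt.1 hlt).eq_or_lt with he | hl
      · subst he; simp at h
      · have a := h1 hl.le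
        simp only [Function.comp] at a
        rcases h with h | ⟨h, h'⟩
        · exact absurd h (not_lt.2 a)
        · exact absurd (h2 _ _ hl h'.symm) h.asymm
    · intro h
      rcases (h1 h.le).lt_or_eq with a | a
      · exact Or.inl a
      · exact Or.inr ⟨h2 _ _ h a, a⟩
  · rw [Finset.disjoint_filter]
    rintro k _ hk ⟨_, hk'⟩
    exact hk.ne hk'

lemma pexc_eq {n : ℕ} (σ : Equiv.Perm (Fin n)) : pexc σ = #{i : Fin n | i < σ i} := by
  unfold pexc
  symm
  refine Finset.card_nbij (fun i => (i : ℕ) + 1) ?_ ?_ ?_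
  · intro i hi
    have hi' : (i : ℕ) < σ i := by simpa using hi
    have := i.2
    have e : pval σ ((i:ℕ) + 1) = σ i + 1 := by
      have : 1 ≤ (i:ℕ) + 1 ∧ (i:ℕ) + 1 ≤ n := by omega
      simp [pval]
    simp only [Finset.coe_filter, Finset.mem_Icc, Set.mem_ofPred_eq, e]; omega
  · intro i _ j _ h; simpa [Fin.ext_iff] using h
  · intro k hk
    simp only [Finset.coe_filter, Finset.mem_Icc, Set.mem_ofPred_eq] at hk
    obtain ⟨hk, hk2⟩ := hk
    refine ⟨⟨k - 1, by omega⟩, ?_, by simp; omega⟩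
    simp only [pval, hk, and_self, dite_true] at hk2
    simp only [Finset.coe_filter, Finset.mem_univ, true_and, Set.mem_ofPred_eq, Fin.lt_def]
    omega

lemma excw_sort {n : ℕ} {β : Type} [LinearOrder β] (g : Fin n → β) : excw g = pexc (Tuple.sort g) := by
  rw [pexc_eq, excw, ← Finset.card_map (Tuple.sort g).toEmbedding (s := univ.filter (fun i => i < Tuple.sort g i))]
  congr 1
  ext j
  simp [rkw_sort]

open Polynomial Finset
open scoped ENNReal

lemma pval_succ {n : ℕ} (σ : Equiv.Perm (Fin n)) (i : Fin n) : pval σ ((i:ℕ) + 1) = σ i + 1 := by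
  have : 1 ≤ (i:ℕ) + 1 ∧ (i:ℕ) + 1 ≤ n := by omega
  simp [pval]

lemma mem_pDES {n : ℕ} (σ : Equiv.Perm (Fin (n+1))) (i : ℕ) (hi : i < n) :
    i + 1 ∈ pDES σ ↔ σ ⟨i+1, by omega⟩ < σ ⟨i, by omega⟩ := by
  unfold pDES
  have h1 := pval_succ σ ⟨i+1, by omega⟩
  have h2 := pval_succ σ ⟨i, by omega⟩
  simp only at h1 h2
  rw [Finset.mem_filter, h1, h2, Finset.mem_Icc, Fin.lt_def]
  omega

lemma pexc_le_pmaj {n : ℕ} (σ : Equiv.Perm (Fin n)) : pexc σ ≤ pmaj σ := by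
  set m := (pDES σ).sup id with hm
  have h1 : m ≤ pmaj σ := by
    apply Finset.sup_le
    intro i hi
    exact Finset.single_le_sum (f := fun i => i) (fun _ _ => Nat.zero_le _) hi
  refine le_trans ?_ h1
  have key : ∀ d i, i + d = n → m < i → pval σ i ≤ i := by
    intro d
    induction d with
    | zero =>
      intro i hi hmi
      have := pval_succ σ ⟨i - 1, by omega⟩
      rw [show i - 1 + 1 = i by omega] at this
      rw [this]; omega
    | succ d ih =>
      intro i hi hmi
      have h2 := ih (i + 1) (by omega) (by omega)
      have h3 : i ∉ pDES σ := fun h => by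
        have := Finset.le_sup (f := id) h
        simp only [id] at this; omega
      have h4 : ¬ pval σ (i+1) < pval σ i := fun h => h3 (by
        unfold pDES; rw [Finset.mem_filter, Finset.mem_Icc]; exact ⟨by omega, h⟩)
      have h5 : pval σ i ≠ pval σ (i+1) := by
        have a := pval_succ σ ⟨i - 1, by omega⟩
        have b := pval_succ σ ⟨i, by omega⟩
        simp only [show i - 1 + 1 = i by omega] at a b
        rw [a, b]
        intro h
        have := σ.injective (Fin.ext (Nat.succ.inj h))
        simp [Fin.ext_iff] at this; omega
      omega
  unfold pexc
  calc _ ≤ #(Finset.Icc 1 m) := by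
        apply Finset.card_le_card
        intro i hi
        rw [Finset.mem_filter, Finset.mem_Icc] at hi
        rw [Finset.mem_Icc]
        refine ⟨hi.1.1, ?_⟩
        by_contra h
        have := key (n - i) i (by omega) (by omega)
        omega
    _ = m := by simp

lemma cond_iff {n : ℕ} (σ : Equiv.Perm (Fin n)) (f : Fin n → ℕ) :
    σ = Tuple.sort (fun j => OrderDual.toDual (f (σ.symm j))) ↔
      ∀ i : Fin n, extf f (i + 1) + (if (i : ℕ) + 1 ∈ pDES σ then 1 else 0) ≤ f i := by
  cases n with
  | zero => constructor
            · intro _ i; exact i.elim0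
            · intro _; exact Subsingleton.elim _ _
  | succ n =>
  rw [Tuple.eq_sort_iff]
  have h1 : (Monotone ((fun j => OrderDual.toDual (f (σ.symm j))) ∘ σ) ∧ ∀ i j, i < j →
      (fun j => OrderDual.toDual (f (σ.symm j))) (σ i) = (fun j => OrderDual.toDual (f (σ.symm j))) (σ j) → σ i < σ j)
      ↔ StrictMono (fun i => toLex (OrderDual.toDual (f i), σ i)) := by
    simp only [Function.comp_def, Equiv.symm_apply_apply]
    constructor
    · rintro ⟨a, b⟩ i j hij
      simp only [Prod.Lex.toLex_lt_toLex]
      rcases (a hij.le).lt_or_eq with h | h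
      · exact Or.inl h
      · exact Or.inr ⟨h, b i j hij h⟩
    · intro h
      refine ⟨fun i j hij => ?_, fun i j hij he => ?_⟩
      · rcases hij.eq_or_lt with rfl | hij
        · exact le_rfl
        · have := h hij
          simp only [Prod.Lex.toLex_lt_toLex] at this
          rcases this with h | h
          · exact h.le
          · exact h.1.le
      · have := h hij
        simp only [Prod.Lex.toLex_lt_toLex] at this
        rcases this with h | h
        · exact absurd he h.ne
        · exact h.2
  rw [h1, Fin.strictMono_iff_lt_succ]
  constructor
  · intro h i
    rcases Nat.lt_or_ge i n with hi | hi
    · have := h ⟨i, hi⟩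
      simp only [Prod.Lex.toLex_lt_toLex, OrderDual.toDual_lt_toDual, OrderDual.toDual_inj] at this
      have e : extf f (i + 1) = f (Fin.succ ⟨i, hi⟩) := by simp [extf, hi]
      have e2 : Fin.castSucc ⟨i, hi⟩ = i := rfl
      have e3 := mem_pDES σ i hi
      rw [e2] at this
      rw [e]
      split_ifs with hd
      · rcases this with h | h
        · omega
        · exact absurd h.2 (not_lt.2 (e3.1 hd).le)
      · rcases this with h | h
        · omega
        · omega
    · have e : extf f (i + 1) = 0 := by simp [extf]; omega
      have e2 : (i : ℕ) + 1 ∉ pDES σ := by simp [pDES]; omega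
      rw [e, if_neg e2]; omega
  · intro h i
    have := h i.castSucc
    have e : extf f (i + 1) = f i.succ := by simp [extf]; rfl
    have e3 := mem_pDES σ i i.2
    simp only [Fin.val_castSucc] at this
    rw [e] at this
    simp only [Prod.Lex.toLex_lt_toLex, OrderDual.toDual_lt_toDual, OrderDual.toDual_inj]
    by_cases hd : σ ⟨i + 1, by omega⟩ < σ ⟨i, by omega⟩
    · rw [if_pos (e3.2 hd)] at this; left; omega
    · rw [if_neg (fun h => hd (e3.1 h))] at this
      rcases (show f i.succ ≤ f i.castSucc by omega).lt_or_eq with h | h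
      · exact Or.inl h
      · refine Or.inr ⟨h.symm, ?_⟩
        rcases (not_lt.1 hd).lt_or_eq with h' | h'
        · exact h'
        · have := σ.injective h'; simp [Fin.ext_iff] at this

lemma words_maj (q t : ℝ≥0∞) (n : ℕ) :
    ∑' w : Fin n → ℕ, q ^ (∑ i, w i) * t ^ excw (fun j => OrderDual.toDual (w j))
     = (∑ σ : Equiv.Perm (Fin n), t ^ pexc σ * q ^ pmaj σ) * ∏ j ∈ range n, (1 - q ^ (j + 1))⁻¹ := by
  have h1 : ∀ w : Fin n → ℕ, q ^ (∑ i, w i) * t ^ excw (fun j => OrderDual.toDual (w j))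
     = ∑ σ : Equiv.Perm (Fin n), if σ = Tuple.sort (fun j => OrderDual.toDual (w j)) then q ^ (∑ i, w i) * t ^ pexc σ else 0 := by
    intro w
    rw [Finset.sum_ite_eq' , if_pos (Finset.mem_univ _), excw_sort]
  simp_rw [h1]
  rw [Summable.tsum_finsetSum (fun _ _ => ENNReal.summable), Finset.sum_mul]
  refine Finset.sum_congr rfl fun σ _ => ?_
  rw [← (Equiv.arrowCongr σ (Equiv.refl ℕ)).tsum_eq]
  have h2 : ∀ f : Fin n → ℕ, (if σ = Tuple.sort (fun j => OrderDual.toDual ((Equiv.arrowCongr σ (Equiv.refl ℕ)) f j)) then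
      q ^ (∑ i, (Equiv.arrowCongr σ (Equiv.refl ℕ)) f i) * t ^ pexc σ else 0) =
      t ^ pexc σ * (if ∀ i : Fin n, extf f (i + 1) + (fun k => if k + 1 ∈ pDES σ then 1 else 0) (i : ℕ) ≤ f i then q ^ (∑ i, f i) else 0) := by
    intro f
    have := cond_iff σ f
    simp only [Equiv.arrowCongr_apply, Equiv.coe_refl, Function.comp, id]
    simp only [this]
    have e : ∑ i, f (σ.symm i) = ∑ i, f i := σ.symm.sum_comp f
    rw [e, mul_ite, mul_zero, mul_comm]
  simp_rw [h2]
  rw [ENNReal.tsum_mul_left, antif_sum q n (fun k => if k + 1 ∈ pDES σ then 1 else 0), mul_assoc]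
  congr 3
  unfold pmaj
  simp only [mul_ite, mul_one, mul_zero]
  rw [← Finset.sum_filter]
  refine Finset.sum_nbij (fun i => i + 1) ?_ ?_ ?_ ?_
  · intro i hi; exact (Finset.mem_filter.1 hi).2
  · intro i _ j _ h; simpa using h
  · intro k hk
    have hk' := hk
    simp only [pDES, Finset.coe_filter, Finset.mem_Icc, Set.mem_ofPred_eq] at hk
    refine ⟨k - 1, ?_, by simp; omega⟩
    simp only [Finset.coe_filter, Finset.mem_range, Set.mem_ofPred_eq]
    rw [show k - 1 + 1 = k by omega]
    exact ⟨by omega, hk'⟩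
  · intro i _; rfl

open Polynomial Finset
open scoped ENNReal

noncomputable def SR (q t z : ℝ) : ℕ → ℝ
  | 0 => 0
  | R + 1 => z * q ^ R + (1 - z * q ^ R) / (1 - t * (z * q ^ R)) * SR q t z R

lemma Svec_SR (q t z : ℝ) : ∀ R : ℕ, Svec t (fun b : Fin R => z * q ^ ((Fin.rev b : Fin R) : ℕ)) = SR q t z R := by
  intro R
  induction R with
  | zero => rfl
  | succ R ih =>
    rw [Svec_succ, SR, ← ih]
    simp [Fin.rev_succ]

lemma excw_congr {n : ℕ} {β γ : Type} [LinearOrder β] [LinearOrder γ] (g : Fin n → β) (h : Fin n → γ)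
    (H : ∀ i j, g i < g j ↔ h i < h j) : excw g = excw h := by
  have H2 : ∀ i j, g i = g j ↔ h i = h j := by
    intro i j
    rw [le_antisymm_iff, le_antisymm_iff, ← not_lt, ← not_lt, ← not_lt, ← not_lt, H, H]
  have H3 : ∀ j, rkw g j = rkw h j := by
    intro j
    unfold rkw
    congr 1
    · exact congrArg card (Finset.filter_congr fun k _ => H k j)
    · exact congrArg card (Finset.filter_congr fun k _ => by rw [H2])
  simp only [excw, H3]

section
variable {q t z : ℝ}

lemma SR_bound (hq0 : 0 < q) (hq1 : q < 1) (ht0 : 0 ≤ t) (ht1 : t < 1) (hz0 : 0 ≤ z) (hz1 : z < 1) (R : ℕ) :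
    0 ≤ SR q t z R ∧ SR q t z R ≤ z * (1 - q ^ R) / (1 - q) := by
  induction R with
  | zero => simp [SR]
  | succ R ih =>
    have hq : 0 < 1 - q := by linarith
    have hqR : 0 < q ^ R := by positivity
    have hqR1 : q ^ R ≤ 1 := pow_le_one₀ hq0.le hq1.le
    set X := z * q ^ R with hX
    have hX0 : 0 ≤ X := by positivity
    have hX1 : X < 1 := by nlinarith
    have hd : 0 < 1 - t * X := by nlinarith
    have hr0 : 0 ≤ (1 - X) / (1 - t * X) := div_nonneg (by linarith) hd.le
    have hr1 : (1 - X) / (1 - t * X) ≤ 1 := by rw [div_le_one hd]; nlinarith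
    rw [SR, ← hX]
    refine ⟨by nlinarith [ih.1], ?_⟩
    have : z * (1 - q ^ (R + 1)) / (1 - q) = X + z * (1 - q ^ R) / (1 - q) := by
      rw [hX]; field_simp; ring
    rw [this]
    nlinarith [ih.1, ih.2]

lemma SR_lt (hq0 : 0 < q) (hq1 : q < 1) (ht0 : 0 ≤ t) (ht1 : t < 1) (hz0 : 0 ≤ z) (hz1 : z < 1 - q) (R : ℕ) :
    SR q t z R ≤ z / (1 - q) := by
  refine (SR_bound hq0 hq1 ht0 ht1 hz0 (by linarith) R).2.trans ?_
  have hq : 0 < 1 - q := by linarith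
  have hqR : 0 < q ^ R := by positivity
  gcongr
  nlinarith

noncomputable def GG (q t z : ℝ) (p : Σ n : ℕ, Fin n → ℕ) : ℝ≥0∞ :=
  ENNReal.ofReal z ^ p.1 * (ENNReal.ofReal q ^ (∑ i, p.2 i) * ENNReal.ofReal t ^ excw (fun j => OrderDual.toDual (p.2 j)))

def iR (R : ℕ) (p : Σ n : ℕ, Fin n → Fin R) : Σ n : ℕ, Fin n → ℕ := ⟨p.1, fun i => (p.2 i : ℕ)⟩

lemma iR_inj (R : ℕ) : Function.Injective (iR R) := by
  rintro ⟨n, w⟩ ⟨m, v⟩ h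
  simp only [iR, Sigma.mk.injEq] at h
  obtain ⟨rfl, h⟩ := h
  have h' := eq_of_heq h
  congr 1
  funext i
  exact Fin.ext (congrFun h' i)

lemma NR_eq (hq0 : 0 < q) (hq1 : q < 1) (ht0 : 0 ≤ t) (ht1 : t < 1) (hz0 : 0 ≤ z) (hz1 : z < 1 - q) (R : ℕ) :
    ∑' p : (Σ n : ℕ, Fin n → Fin R), GG q t z (iR R p) = ENNReal.ofReal (1 / (1 - SR q t z R)) := by
  have hS := SR_lt hq0 hq1 ht0 ht1 hz0 hz1 R
  have hz2 : z / (1 - q) < 1 := by rw [div_lt_one (by linarith)]; exact hz1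
  rw [← Svec_SR, ← words_closed ht0 ht1]
  · rw [ENNReal.tsum_sigma']
    refine tsum_congr fun n => ?_
    rw [tsum_fintype, ← (Equiv.arrowCongr (Equiv.refl (Fin n)) Fin.revPerm).sum_comp]
    refine Finset.sum_congr rfl fun w _ => ?_
    simp only [GG, iR, Equiv.arrowCongr_apply, Equiv.refl_symm, Equiv.coe_refl, Function.comp, id, Fin.revPerm_apply]
    rw [← mul_assoc]
    congr 2
    · simp only [ENNReal.ofReal_mul hz0, Finset.prod_mul_distrib, Finset.prod_const, ENNReal.ofReal_pow hq0.le]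
      rw [Finset.prod_pow_eq_pow_sum]
      simp
      rfl
    · apply excw_congr
      intro i j
      simp only [OrderDual.toDual_lt_toDual, Fin.val_fin_lt, Fin.rev_lt_rev]
  · intro i; positivity
  · intro i
    have : q ^ ((Fin.rev i : Fin R) : ℕ) ≤ 1 := pow_le_one₀ hq0.le hq1.le
    nlinarith
  · rw [Svec_SR]; linarith

lemma NN_eq (hq0 : 0 < q) (hq1 : q < 1) (ht0 : 0 ≤ t) (ht1 : t < 1) (hz0 : 0 ≤ z) (hz1 : z < 1 - q) (L : ℝ)
    (hL : Filter.Tendsto (SR q t z) Filter.atTop (nhds L)) :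
    L < 1 ∧ ∑' p : (Σ n : ℕ, Fin n → ℕ), GG q t z p = ENNReal.ofReal (1 / (1 - L)) := by
  have hz2 : z / (1 - q) < 1 := by rw [div_lt_one (by linarith)]; exact hz1
  have hL1 : L < 1 := lt_of_le_of_lt (le_of_tendsto' hL (SR_lt hq0 hq1 ht0 ht1 hz0 hz1)) hz2
  refine ⟨hL1, ?_⟩
  have hT : Filter.Tendsto (fun R => ENNReal.ofReal (1 / (1 - SR q t z R))) Filter.atTop (nhds (ENNReal.ofReal (1 / (1 - L)))) := by
    apply ENNReal.tendsto_ofReal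
    exact Filter.Tendsto.div tendsto_const_nhds (tendsto_const_nhds.sub hL) (by linarith)
  apply le_antisymm
  · rw [ENNReal.tsum_eq_iSup_sum]
    refine iSup_le fun s => ?_
    refine ge_of_tendsto hT ?_
    obtain ⟨R0, hR0⟩ : ∃ R0 : ℕ, ∀ p ∈ s, ∀ i, p.2 i < R0 := by
      refine ⟨s.sup (fun p => ∑ i, p.2 i) + 1, fun p hp i => ?_⟩
      have h1 := Finset.le_sup (f := fun p : (Σ n : ℕ, Fin n → ℕ) => ∑ i, p.2 i) hp
      have h2 := Finset.single_le_sum (f := p.2) (fun _ _ => Nat.zero_le _) (Finset.mem_univ i)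
      omega
    filter_upwards [Filter.eventually_ge_atTop R0] with R hR
    rw [← NR_eq hq0 hq1 ht0 ht1 hz0 hz1]
    rw [← Finset.sum_preimage (iR R) s ((iR_inj R).injOn) (GG q t z)]
    · exact ENNReal.sum_le_tsum _
    · intro p hp hp2
      exact absurd ⟨⟨p.1, fun i => ⟨p.2 i, (hR0 p hp i).trans_le hR⟩⟩, rfl⟩ hp2
  · refine le_of_tendsto' hT fun R => ?_
    rw [← NR_eq hq0 hq1 ht0 ht1 hz0 hz1]
    exact ENNReal.tsum_comp_le_tsum_of_injective (iR_inj R) _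
end

open Polynomial Finset
open scoped ENNReal

noncomputable def qf (q : ℝ) (n : ℕ) : ℝ := ∏ j ∈ range n, (1 - q ^ (j + 1))

noncomputable def EE (q z : ℝ) : ℝ := ∑' n : ℕ, (qf q n)⁻¹ * z ^ n

noncomputable def Ceul (q t : ℝ) (n : ℕ) : ℝ := ∑ σ : Equiv.Perm (Fin n), t ^ pexc σ * q ^ pmaj σ

section
variable {q t z : ℝ}

lemma one_sub_pow_pos (hq0 : 0 < q) (hq1 : q < 1) (j : ℕ) : 1 - q ≤ 1 - q ^ (j + 1) := by
  have : q ^ (j+1) ≤ q := by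
    rw [pow_succ]; have : q ^ j ≤ 1 := pow_le_one₀ hq0.le hq1.le
    nlinarith
  linarith

lemma qf_succ (n : ℕ) : qf q (n + 1) = qf q n * (1 - q ^ (n+1)) := by
  rw [qf, Finset.prod_range_succ, qf]

lemma qf_ge (hq0 : 0 < q) (hq1 : q < 1) (n : ℕ) : (1 - q) ^ n ≤ qf q n := by
  rw [qf, ← Finset.card_range n, ← Finset.prod_const, Finset.card_range]
  refine Finset.prod_le_prod (fun _ _ => by linarith) (fun j _ => one_sub_pow_pos hq0 hq1 j)

lemma qf_pos (hq0 : 0 < q) (hq1 : q < 1) (n : ℕ) : 0 < qf q n :=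
  lt_of_lt_of_le (pow_pos (by linarith) n) (qf_ge hq0 hq1 n)

lemma EE_bd (hq0 : 0 < q) (hq1 : q < 1) (hz0 : 0 ≤ z) (n : ℕ) :
    ‖(qf q n)⁻¹ * z ^ n‖ ≤ (z / (1 - q)) ^ n := by
  have h1 := qf_pos hq0 hq1 n
  have h2 := qf_ge hq0 hq1 n
  have h3 : 0 < 1 - q := by linarith
  rw [Real.norm_of_nonneg (by positivity), div_pow, div_eq_inv_mul]
  gcongr

lemma geo_summable (hq1 : q < 1) (hz0 : 0 ≤ z) (hz1 : z < 1 - q) :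
    Summable (fun n : ℕ => (z / (1 - q)) ^ n) := by
  apply summable_geometric_of_lt_one
  · exact div_nonneg hz0 (by linarith)
  · rw [div_lt_one (by linarith)]; exact hz1

lemma EE_summable (hq0 : 0 < q) (hq1 : q < 1) (hz0 : 0 ≤ z) (hz1 : z < 1 - q) :
    Summable (fun n : ℕ => ‖(qf q n)⁻¹ * z ^ n‖) :=
  Summable.of_nonneg_of_le (fun _ => norm_nonneg _) (EE_bd hq0 hq1 hz0) (geo_summable hq1 hz0 hz1)

lemma EE_pos (hq0 : 0 < q) (hq1 : q < 1) (hz0 : 0 ≤ z) (hz1 : z < 1 - q) : 0 < EE q z := by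
  have hs := (EE_summable hq0 hq1 hz0 hz1).of_norm
  have h0 : ∀ n, 0 ≤ (qf q n)⁻¹ * z ^ n := fun n => mul_nonneg (inv_nonneg.2 (qf_pos hq0 hq1 n).le) (by positivity)
  have : (qf q 0)⁻¹ * z ^ 0 ≤ EE q z := hs.le_tsum 0 (fun n _ => h0 n)
  simp [qf] at this
  linarith

lemma EE_rec (hq0 : 0 < q) (hq1 : q < 1) (hz0 : 0 ≤ z) (hz1 : z < 1 - q) : (1 - z) * EE q z = EE q (q * z) := by
  have hs := (EE_summable hq0 hq1 hz0 hz1).of_norm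
  have hs' := (EE_summable (z := q * z) hq0 hq1 (by positivity) (by nlinarith)).of_norm
  have h1 : EE q z - EE q (q * z) = z * EE q z := by
    unfold EE
    rw [← hs.tsum_sub hs', (hs.sub hs').tsum_eq_zero_add, ← tsum_mul_left]
    simp only [pow_zero, sub_self, zero_add]
    refine tsum_congr fun n => ?_
    rw [qf_succ]
    have a := (qf_pos hq0 hq1 n).ne'
    have b : 1 - q ^ (n+1) ≠ 0 := by
      have := one_sub_pow_pos hq0 hq1 n; intro h; linarith
    field_simp
    ring
  linarith

lemma EE_tendsto (hq0 : 0 < q) (hq1 : q < 1) (hz0 : 0 ≤ z) (hz1 : z < 1 - q) :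
    Filter.Tendsto (fun R : ℕ => EE q (z * q ^ R)) Filter.atTop (nhds 1) := by
  have h1 : (1 : ℝ) = ∑' n : ℕ, (qf q n)⁻¹ * (0 : ℝ) ^ n := by
    rw [tsum_eq_single 0]
    · simp [qf]
    · intro n hn; simp [hn]
  have hz : Filter.Tendsto (fun R : ℕ => z * q ^ R) Filter.atTop (nhds 0) := by
    simpa using (tendsto_pow_atTop_nhds_zero_of_lt_one hq0.le hq1).const_mul z
  rw [h1]
  refine tendsto_tsum_of_dominated_convergence (geo_summable hq1 hz0 hz1) ?_ ?_
  · intro n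
    exact (hz.pow n).const_mul _
  · refine Filter.Eventually.of_forall fun R n => ?_
    have hR : q ^ R ≤ 1 := pow_le_one₀ hq0.le hq1.le
    refine (EE_bd hq0 hq1 (by positivity) n).trans ?_
    have : 0 < 1 - q := by linarith
    gcongr
    nlinarith

lemma QR_eq (hq0 : 0 < q) (hq1 : q < 1) (ht0 : 0 ≤ t) (ht1 : t < 1) (hz0 : 0 ≤ z) (hz1 : z < 1 - q) (R : ℕ) :
    (1 - t * q) * (1 - SR q t z R) = (1 - t * z) * (EE q (z * q ^ R) * EE q (t * z) / (EE q z * EE q (t * z * q ^ R)))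
      - t * q + t * (z * q ^ R) := by
  have aux : ∀ R : ℕ, 0 ≤ z * q ^ R ∧ z * q ^ R < 1 - q ∧ 0 ≤ t * z * q ^ R ∧ t * z * q ^ R < 1 - q := by
    intro R
    have h1 : 0 < q ^ R := by positivity
    have h2 : q ^ R ≤ 1 := pow_le_one₀ hq0.le hq1.le
    have h3 : z * q ^ R ≤ z := by nlinarith
    have h4 : 0 ≤ z * q ^ R := by positivity
    refine ⟨h4, by linarith, by positivity, ?_⟩
    have : t * z * q ^ R = t * (z * q ^ R) := by ring
    nlinarith
  have hE := EE_pos hq0 hq1 hz0 hz1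
  have hEt := EE_pos (z := t * z) hq0 hq1 (by positivity) (by nlinarith)
  induction R with
  | zero => simp [SR]; field_simp; ring
  | succ R ih =>
    obtain ⟨a1, a2, a3, a4⟩ := aux R
    have r1 := EE_rec hq0 hq1 a1 a2
    have r2 := EE_rec hq0 hq1 a3 a4
    have p1 := EE_pos hq0 hq1 a1 a2
    have p2 := EE_pos hq0 hq1 a3 a4
    rw [SR, show z * q ^ (R+1) = q * (z * q ^ R) by ring, show t * z * q ^ (R+1) = q * (t * z * q ^ R) by ring, ← r1, ← r2,
      show t * z * q ^ R = t * (z * q ^ R) by ring] at *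
    set X := z * q ^ R
    have hd : 1 - t * X ≠ 0 := by intro h; linarith
    have hS : (1 - t * q) * SR q t z R = 1 - t * X - (1 - t * z) * (EE q X * EE q (t * z) / (EE q z * EE q (t * X))) := by linarith
    have : (1 - t * q) * (1 - (X + (1 - X) / (1 - t * X) * SR q t z R)) = (1 - t * q) * (1 - X) - (1 - X) / (1 - t * X) * ((1 - t * q) * SR q t z R) := by ring
    rw [this, hS]
    field_simp
    ring

lemma gf_main (hq0 : 0 < q) (hq1 : q < 1) (ht0 : 0 ≤ t) (ht1 : t < 1) (hz0 : 0 ≤ z) (hz1 : z < 1 - q) :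
    Summable (fun n : ℕ => Ceul q t n * (qf q n)⁻¹ * z ^ n) ∧
    (∑' n : ℕ, Ceul q t n * (qf q n)⁻¹ * z ^ n) * (EE q (t * q * z) - t * q * EE q z) = (1 - t * q) * EE q z := by
  have hE := EE_pos hq0 hq1 hz0 hz1
  have htz0 : 0 ≤ t * z := by positivity
  have htz1 : t * z < 1 - q := by nlinarith
  have hEt := EE_pos hq0 hq1 htz0 htz1
  have htq : 0 < 1 - t * q := by nlinarith
  set L : ℝ := 1 - ((1 - t * z) * (1 * EE q (t * z) / (EE q z * 1)) - t * q + t * 0) / (1 - t * q) with hLdef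
  have hz' : Filter.Tendsto (fun R : ℕ => z * q ^ R) Filter.atTop (nhds 0) := by
    simpa using (tendsto_pow_atTop_nhds_zero_of_lt_one hq0.le hq1).const_mul z
  have hL : Filter.Tendsto (SR q t z) Filter.atTop (nhds L) := by
    have : SR q t z = fun R => 1 - ((1 - t * z) * (EE q (z * q ^ R) * EE q (t * z) / (EE q z * EE q (t * z * q ^ R)))
      - t * q + t * (z * q ^ R)) / (1 - t * q) := by
      funext R
      rw [← QR_eq hq0 hq1 ht0 ht1 hz0 hz1]
      field_simp
      ring
    rw [this]
    refine tendsto_const_nhds.sub (Filter.Tendsto.div_const ?_ _)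
    refine ((Filter.Tendsto.const_mul _ ?_).sub tendsto_const_nhds).add (hz'.const_mul _)
    refine Filter.Tendsto.div ((EE_tendsto hq0 hq1 hz0 hz1).mul_const _) ((EE_tendsto hq0 hq1 htz0 htz1).const_mul _) (by simpa using hE.ne')
  obtain ⟨hL1, hN⟩ := NN_eq hq0 hq1 ht0 ht1 hz0 hz1 L hL
  have hpos : ∀ n, 0 ≤ Ceul q t n * (qf q n)⁻¹ * z ^ n := by
    intro n
    have : 0 ≤ Ceul q t n := Finset.sum_nonneg fun σ _ => by positivity
    have := (qf_pos hq0 hq1 n).le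
    positivity
  have hterm : ∑' p : (Σ n : ℕ, Fin n → ℕ), GG q t z p = ∑' n : ℕ, ENNReal.ofReal (Ceul q t n * (qf q n)⁻¹ * z ^ n) := by
    rw [ENNReal.tsum_sigma']
    refine tsum_congr fun n => ?_
    simp only [GG]
    rw [ENNReal.tsum_mul_left, words_maj]
    have e1 : ∀ j ∈ range n, (1 - ENNReal.ofReal q ^ (j + 1))⁻¹ = ENNReal.ofReal ((1 - q ^ (j+1))⁻¹) := by
      intro j _
      have := one_sub_pow_pos hq0 hq1 j
      rw [← ENNReal.ofReal_pow hq0.le, ← ENNReal.ofReal_one, ← ENNReal.ofReal_sub _ (by positivity), ENNReal.ofReal_inv_of_pos (by linarith)]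
    have e2 : ∑ σ : Equiv.Perm (Fin n), ENNReal.ofReal t ^ pexc σ * ENNReal.ofReal q ^ pmaj σ = ENNReal.ofReal (Ceul q t n) := by
      rw [Ceul, ENNReal.ofReal_sum_of_nonneg (fun σ _ => by positivity)]
      refine Finset.sum_congr rfl fun σ _ => ?_
      rw [ENNReal.ofReal_mul (by positivity), ENNReal.ofReal_pow ht0, ENNReal.ofReal_pow hq0.le]
    have e3 : 0 ≤ Ceul q t n := Finset.sum_nonneg fun σ _ => by positivity
    rw [Finset.prod_congr rfl e1, e2, ← ENNReal.ofReal_prod_of_nonneg, ← ENNReal.ofReal_mul e3, ← ENNReal.ofReal_pow hz0, ← ENNReal.ofReal_mul (by positivity)]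
    · congr 1
      rw [qf, Finset.prod_inv_distrib]; ring
    · intro j _
      have := one_sub_pow_pos hq0 hq1 j
      rw [inv_nonneg]; linarith
  rw [hterm] at hN
  have hsum : Summable (fun n : ℕ => Ceul q t n * (qf q n)⁻¹ * z ^ n) := by
    have := ENNReal.summable_toReal (f := fun n : ℕ => ENNReal.ofReal (Ceul q t n * (qf q n)⁻¹ * z ^ n)) (by rw [hN]; exact ENNReal.ofReal_ne_top)
    simpa only [ENNReal.toReal_ofReal (hpos _)] using this
  refine ⟨hsum, ?_⟩
  rw [← ENNReal.ofReal_tsum_of_nonneg hpos hsum, ENNReal.ofReal_eq_ofReal_iff (tsum_nonneg hpos) (by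
    rw [one_div, inv_nonneg]; linarith)] at hN
  rw [hN]
  have h2 : (1 - L) * (1 - t * q) * EE q z = EE q (t * q * z) - t * q * EE q z := by
    rw [show t * q * z = q * (t * z) by ring, ← EE_rec hq0 hq1 htz0 htz1, hLdef]
    field_simp
    ring
  rw [← h2]
  have : 1 - L ≠ 0 := by linarith
  field_simp
end

open Polynomial Finset
open scoped ENNReal

lemma ps_zero0 (a : ℕ → ℝ) (ρ : ℝ) (hρ : 0 < ρ)
    (hs : ∀ z, 0 < z → z < ρ → Summable (fun n => ‖a n * z ^ n‖))
    (h0 : ∀ z, 0 < z → z < ρ → ∑' n, a n * z ^ n = 0) : a 0 = 0 := by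
  have h1 : a 0 = ∑' n : ℕ, a n * (0 : ℝ) ^ n := by
    rw [tsum_eq_single 0]
    · simp
    · intro n hn; simp [hn]
  have hT : Filter.Tendsto (fun z : ℝ => ∑' n, a n * z ^ n) (nhdsWithin 0 (Set.Ioi 0)) (nhds (a 0)) := by
    rw [h1]
    refine tendsto_tsum_of_dominated_convergence (hs (ρ / 2) (by linarith) (by linarith)) ?_ ?_
    · intro n
      have : Filter.Tendsto (fun z : ℝ => a n * z ^ n) (nhds 0) (nhds (a n * 0 ^ n)) :=
        (Continuous.tendsto (by fun_prop) 0)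
      exact this.mono_left nhdsWithin_le_nhds
    · have : Set.Ioo (0:ℝ) (ρ/2) ∈ nhdsWithin (0:ℝ) (Set.Ioi 0) := Ioo_mem_nhdsGT (by linarith)
      filter_upwards [this] with z hz n
      rw [norm_mul, norm_mul, norm_pow, norm_pow]
      gcongr
      rw [Real.norm_of_nonneg hz.1.le, Real.norm_of_nonneg (by linarith)]
      exact hz.2.le
  have hZ : Filter.Tendsto (fun z : ℝ => ∑' n, a n * z ^ n) (nhdsWithin 0 (Set.Ioi 0)) (nhds 0) := by
    refine tendsto_const_nhds.congr' ?_
    have : Set.Ioo (0:ℝ) ρ ∈ nhdsWithin (0:ℝ) (Set.Ioi 0) := Ioo_mem_nhdsGT hρ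
    filter_upwards [this] with z hz
    exact (h0 z hz.1 hz.2).symm
  exact tendsto_nhds_unique hT hZ

lemma ps_zero (n : ℕ) : ∀ (a : ℕ → ℝ) (ρ : ℝ) (_ : 0 < ρ)
    (_ : ∀ z, 0 < z → z < ρ → Summable (fun n => ‖a n * z ^ n‖))
    (_ : ∀ z, 0 < z → z < ρ → ∑' n, a n * z ^ n = 0), a n = 0 := by
  induction n with
  | zero => intro a ρ hρ hs h0; exact ps_zero0 a ρ hρ hs h0
  | succ n ih =>
    intro a ρ hρ hs h0
    have ha := ps_zero0 a ρ hρ hs h0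
    refine ih (fun n => a (n+1)) ρ hρ ?_ ?_
    · intro z hz hz'
      have := ((summable_nat_add_iff 1).2 (hs z hz hz')).mul_left (z⁻¹)
      refine this.congr fun n => ?_
      rw [norm_mul, norm_mul, norm_pow, norm_pow, Real.norm_of_nonneg hz.le]
      field_simp
      ring
    · intro z hz hz'
      have h := h0 z hz hz'
      rw [(hs z hz hz').of_norm.tsum_eq_zero_add, ha, zero_mul, zero_add] at h
      have : ∑' n, a (n+1) * z ^ (n+1) = z * ∑' n, a (n+1) * z ^ n := by
        rw [← tsum_mul_left]; exact tsum_congr fun n => by ring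
      rw [this] at h
      exact (mul_eq_zero.1 h).resolve_left hz.ne'

section
variable {q t : ℝ}
lemma conv_main (hq0 : 0 < q) (hq1 : q < 1) (ht0 : 0 ≤ t) (ht1 : t < 1) (n : ℕ) :
    ∑ p ∈ antidiagonal n, (Ceul q t p.1 * (qf q p.1)⁻¹) * (((t*q) ^ p.2 - t * q) * (qf q p.2)⁻¹)
      = (1 - t * q) * (qf q n)⁻¹ := by
  have hT0 : 0 ≤ t * q := by positivity
  have hT1 : t * q < 1 := by nlinarith
  rw [← sub_eq_zero]
  have key : ∀ z, 0 < z → z < 1 - q → 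
     HasSum (fun n => (∑ p ∈ antidiagonal n, (Ceul q t p.1 * (qf q p.1)⁻¹) * (((t*q) ^ p.2 - t * q) * (qf q p.2)⁻¹) - (1 - t * q) * (qf q n)⁻¹) * z ^ n) 0 
      ∧ Summable (fun n => ‖(∑ p ∈ antidiagonal n, (Ceul q t p.1 * (qf q p.1)⁻¹) * (((t*q) ^ p.2 - t * q) * (qf q p.2)⁻¹) - (1 - t * q) * (qf q n)⁻¹) * z ^ n‖) := by
    intro z hz0 hz1
    obtain ⟨hs, hm⟩ := gf_main hq0 hq1 ht0 ht1 hz0.le hz1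
    have hf : Summable (fun n : ℕ => ‖Ceul q t n * (qf q n)⁻¹ * z ^ n‖) := hs.norm
    have e1 := EE_summable hq0 hq1 hz0.le hz1
    have e2 := EE_summable (z := t * q * z) hq0 hq1 (by positivity) (by nlinarith)
    have hgeq : ∀ n, (((t*q) ^ n - t * q) * (qf q n)⁻¹) * z ^ n = (qf q n)⁻¹ * (t * q * z) ^ n - t * q * ((qf q n)⁻¹ * z ^ n) := by
      intro n; rw [mul_pow (t*q) z]; ring
    have hg1 : Summable (fun n : ℕ => (((t*q) ^ n - t * q) * (qf q n)⁻¹) * z ^ n) := by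
      simp_rw [hgeq]
      exact e2.of_norm.sub (e1.of_norm.mul_left _)
    have hg : Summable (fun n : ℕ => ‖(((t*q) ^ n - t * q) * (qf q n)⁻¹) * z ^ n‖) := hg1.norm
    have hgs : ∑' n, (((t*q) ^ n - t * q) * (qf q n)⁻¹) * z ^ n = EE q (t * q * z) - t * q * EE q z := by
      simp_rw [hgeq]
      rw [e2.of_norm.tsum_sub (e1.of_norm.mul_left _), tsum_mul_left, EE, EE]
    rw [← hgs, tsum_mul_tsum_eq_tsum_sum_antidiagonal_of_summable_norm hf hg] at hm
    have hc := summable_norm_sum_mul_antidiagonal_of_summable_norm hf hg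
    have hre : ∀ n, ∑ p ∈ antidiagonal n, (Ceul q t p.1 * (qf q p.1)⁻¹ * z ^ p.1) * ((((t*q) ^ p.2 - t * q) * (qf q p.2)⁻¹) * z ^ p.2)
       = (∑ p ∈ antidiagonal n, (Ceul q t p.1 * (qf q p.1)⁻¹) * (((t*q) ^ p.2 - t * q) * (qf q p.2)⁻¹)) * z ^ n := by
      intro n
      rw [Finset.sum_mul]
      refine Finset.sum_congr rfl fun p hp => ?_
      rw [← (mem_antidiagonal.1 hp), pow_add]; ring
    simp_rw [hre] at hm hc
    have hfin : HasSum (fun n => (∑ p ∈ antidiagonal n, (Ceul q t p.1 * (qf q p.1)⁻¹) * (((t*q) ^ p.2 - t * q) * (qf q p.2)⁻¹) - (1 - t * q) * (qf q n)⁻¹) * z ^ n) 0 := by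
      have h1 := hc.of_norm.hasSum
      rw [hm] at h1
      have h2 := (e1.of_norm.hasSum).mul_left (1 - t * q)
      have h3 := h1.sub h2
      rw [EE, sub_self] at h3
      refine h3.congr_fun ?_ |> id
      intro n
      ring
    exact ⟨hfin, hfin.summable.norm⟩
  exact ps_zero n (fun n => (∑ p ∈ antidiagonal n, (Ceul q t p.1 * (qf q p.1)⁻¹) * (((t*q) ^ p.2 - t * q) * (qf q p.2)⁻¹) - (1 - t * q) * (qf q n)⁻¹)) (1 - q) (by linarith) (fun z h h' => (key z h h').2) (fun z h h' => (key z h h').1.tsum_eq)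
end

open Polynomial Finset
open scoped ENNReal

noncomputable def gbin (q : ℝ) : ℕ → ℕ → ℝ
  | _, 0 => 1
  | 0, _ + 1 => 0
  | n + 1, k + 1 => gbin q n k + q ^ (k + 1) * gbin q n (k + 1)

lemma gbin_zero (q : ℝ) (n : ℕ) : gbin q n 0 = 1 := by cases n <;> rfl

lemma gbin_lt (q : ℝ) : ∀ n k : ℕ, n < k → gbin q n k = 0
  | _, 0, h => by omega
  | 0, _ + 1, _ => rfl
  | n + 1, k + 1, h => by
    rw [gbin, gbin_lt q n k (by omega), gbin_lt q n (k+1) (by omega)]; simp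

lemma gbin_qf (q : ℝ) : ∀ n a b : ℕ, a + b = n → gbin q n a * (qf q a * qf q b) = qf q n
  | n, 0, b, h => by
    have : b = n := by omega
    subst this
    rw [gbin_zero]; simp [qf]
  | 0, a + 1, b, h => by omega
  | n + 1, a + 1, 0, h => by
    have := gbin_qf q n a 0 (by omega)
    have h2 : a = n := by omega
    subst h2
    rw [gbin, gbin_lt q a (a+1) (by omega), mul_zero, add_zero, qf_succ]
    rw [← mul_assoc, ← mul_assoc, mul_right_comm, mul_assoc (gbin q a a), this]
  | n + 1, a + 1, b + 1, h => by
    have h1 := gbin_qf q n a (b+1) (by omega)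
    have h2 := gbin_qf q n (a+1) b (by omega)
    have h3 : q ^ (n+1) = q ^ (a+1) * q ^ (b+1) := by rw [← pow_add]; congr 1; omega
    rw [gbin, qf_succ n, h3]
    rw [qf_succ] at h1 h2
    rw [qf_succ, qf_succ]
    linear_combination (1 - q ^ (a+1)) * h1 + q ^ (a+1) * (1 - q ^ (b+1)) * h2

lemma hockey (q : ℝ) (a n : ℕ) : ∀ d m : ℕ, m + d = n + 1 →
    ∑ p ∈ Ico m (n+1), q ^ ((a+1)*p) * gbin q (n - p) a = q ^ ((a+1)*m) * gbin q (n + 1 - m) (a+1) := by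
  intro d
  induction d with
  | zero =>
    intro m hm
    have : m = n + 1 := by omega
    subst this
    simp [gbin]
  | succ d ih =>
    intro m hm
    rw [Finset.sum_eq_sum_Ico_succ_bot (by omega), ih (m+1) (by omega)]
    obtain ⟨e, he⟩ : ∃ e, n - m = e := ⟨_, rfl⟩
    rw [show n + 1 - m = e + 1 by omega, show n + 1 - (m+1) = e by omega, he, gbin]
    rw [show (a+1)*(m+1) = (a+1)*m + (a+1) by ring, pow_add]
    ring

section
variable (q T : ℝ)

noncomputable def wgt (s : ℕ) : ℝ := (T - T ^ s) / (1 - T)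

noncomputable def DA : List ℕ → ℕ → ℝ × ℝ
  | [], _ => (1, 1 + T)
  | y :: l, x => (if y < x then 0 else (DA l y).2, if y < x then T * (DA l y).1 else (1 + T) * (DA l y).2)

noncomputable def WL : List ℕ → ℝ
  | [] => 1
  | x :: l => (DA T l x).1

noncomputable def QL : ℕ → List ℕ → ℕ → ℝ
  | s, [], _ => wgt T s + 1
  | s, z :: l, y => wgt T s * (DA T l z).1 + if y ≤ z then QL (s + 1) l z else 0

lemma QL_eq (hT : T ≠ 1) (l : List ℕ) : ∀ s y : ℕ, QL T (s+1) l y = (1 - T ^ s) / (1 - T) * (DA T l y).2 - wgt T s * (DA T l y).1 := by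
  have h : 1 - T ≠ 0 := sub_ne_zero.2 hT.symm
  induction l with
  | nil =>
    intro s y
    simp only [QL, DA, wgt]
    field_simp
    ring
  | cons z l ih =>
    intro s y
    simp only [QL, DA]
    rw [ih]
    by_cases hz : z < y
    · rw [if_pos hz, if_pos hz, if_neg (by omega)]
      simp only [wgt]
      field_simp
      ring
    · rw [if_neg hz, if_neg hz, if_pos (by omega)]
      simp only [wgt]
      field_simp
      ring

lemma QL_one (hT : T ≠ 1) (l : List ℕ) (y : ℕ) : QL T 1 l y = (DA T l y).1 := by
  have h : 1 - T ≠ 0 := sub_ne_zero.2 hT.symm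
  rw [show 1 = 0 + 1 by rfl, QL_eq T hT, wgt]
  simp only [pow_zero, sub_self, zero_div, zero_mul]
  field_simp
  ring

noncomputable def CSm : ℕ → (List ℕ → ℝ) → ℝ
  | 0, F => F []
  | n + 1, F => ∑ p ∈ range (n + 1), q ^ p * CSm n (fun l => F (p :: l))

lemma CSm_add (n : ℕ) : ∀ F G : List ℕ → ℝ, CSm q n (fun l => F l + G l) = CSm q n F + CSm q n G := by
  induction n with
  | zero => intro F G; rfl
  | succ n ih =>
    intro F G
    simp only [CSm, ih (fun l => F (_ :: l)) (fun l => G (_ :: l)), mul_add, Finset.sum_add_distrib]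

lemma CSm_mul (n : ℕ) : ∀ (c : ℝ) (F : List ℕ → ℝ), CSm q n (fun l => c * F l) = c * CSm q n F := by
  induction n with
  | zero => intro c F; rfl
  | succ n ih =>
    intro c F
    simp only [CSm, ih c (fun l => F (_ :: l)), Finset.mul_sum]
    exact Finset.sum_congr rfl fun p _ => by ring

noncomputable def gam (n : ℕ) : ℝ := CSm q n (WL T)

noncomputable def UU : ℕ → ℕ → ℕ → ℝ
  | 0, _, _ => 1
  | n + 1, s, m => ∑ p ∈ Ico m (n + 1), q ^ p * (wgt T s * gam q T n + UU n (s + 1) p)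

lemma UU_link (n : ℕ) : ∀ s m : ℕ,
    ∑ p ∈ Ico m (n+1), q ^ p * CSm q n (fun l => QL T s l p) = UU q T (n+1) s m := by
  induction n with
  | zero =>
    intro s m
    rw [UU]
    refine Finset.sum_congr rfl fun p _ => ?_
    simp [CSm, QL, UU, gam, WL]
  | succ n ih =>
    intro s m
    rw [UU]
    refine Finset.sum_congr rfl fun p hp => ?_
    congr 1
    rw [← ih (s+1) p, gam]
    simp only [CSm, QL, WL]
    rw [Finset.mul_sum]
    have : Ico p (n+1) = (range (n+1)).filter (fun z => p ≤ z) := by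
      ext z; simp; omega
    rw [this, Finset.sum_filter, ← Finset.sum_add_distrib]
    refine Finset.sum_congr rfl fun z _ => ?_
    rw [CSm_add, CSm_mul]
    split_ifs with h
    · ring
    · have : CSm q n (fun _ => (0:ℝ)) = 0 := by
        have := CSm_mul q n 0 (fun _ => (0:ℝ))
        simpa using this
      rw [this]; ring

lemma UU_eq (n : ℕ) : ∀ s m : ℕ, m ≤ n →
    UU q T n s m = (if m = 0 then 1 else 0) + ∑ a ∈ range n, q ^ ((a+1)*m) * gbin q (n - m) (a+1) * wgt T (s + a) * gam q T (n - 1 - a) := by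
  induction n with
  | zero => intro s m hm; simp [UU]; omega
  | succ n ih =>
    intro s m hm
    rw [UU]
    have h1 : ∀ p ∈ Ico m (n+1), q ^ p * (wgt T s * gam q T n + UU q T n (s + 1) p)
       = (q ^ p * if p = 0 then 1 else 0) + (q ^ ((0+1)*p) * gbin q (n-p) 0 * (wgt T s * gam q T n) 
         + ∑ a ∈ range n, (q ^ ((a+1+1)*p) * gbin q (n - p) (a+1)) * (wgt T (s + 1 + a) * gam q T (n - 1 - a))) := by
      intro p hp
      rw [mem_Ico] at hp
      rw [ih _ _ (by omega), gbin_zero, mul_add, mul_add, Finset.mul_sum]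
      have : ∀ a, q ^ ((a+1+1)*p) = q ^ p * q ^ ((a+1)*p) := by intro a; rw [← pow_add]; congr 1; ring
      simp only [this]
      rw [show (0+1)*p = p by ring]
      have e : ∀ a ∈ range n, q ^ p * q ^ ((a+1)*p) * gbin q (n-p) (a+1) * (wgt T (s+1+a) * gam q T (n-1-a)) = q ^ p * (q ^ ((a+1)*p) * gbin q (n-p) (a+1) * wgt T (s+1+a) * gam q T (n-1-a)) := by
        intro a _; ring
      rw [Finset.sum_congr rfl e]
      ring
    rw [Finset.sum_congr rfl h1, Finset.sum_add_distrib, Finset.sum_add_distrib, ← Finset.sum_mul, Finset.sum_comm, hockey q 0 n (n+1-m) m (by omega)]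
    congr 1
    · split_ifs with hm0
      · subst hm0
        rw [Finset.sum_eq_single 0]
        · simp
        · intro b _ hb; simp [hb]
        · intro h; simp at h
      · refine Finset.sum_eq_zero fun p hp => ?_
        rw [mem_Ico] at hp
        rw [if_neg (by omega), mul_zero]
    · rw [Finset.sum_range_succ', add_comm]
      congr 1
      · refine Finset.sum_congr rfl fun a ha => ?_
        rw [← Finset.sum_mul, hockey q (a+1) n (n+1-m) m (by omega), show n + 1 - 1 - (a+1) = n - 1 - a by omega, show s + 1 + a = s + (a+1) by omega]
        ring
      · simp; ring

lemma gam_rec (hT : T ≠ 1) (n : ℕ) : gam q T (n+1) = 1 + ∑ a ∈ range (n+1), gbin q (n+1) (a+1) * wgt T (a+1) * gam q T (n - a) := by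
  rw [gam, CSm]
  simp only [WL]
  simp only [← QL_one T hT]
  rw [Finset.range_eq_Ico, UU_link, UU_eq q T (n+1) 1 0 (by omega)]
  simp only [Nat.mul_zero, pow_zero, one_mul, Nat.sub_zero, add_tsub_cancel_right, if_true, ← Finset.range_eq_Ico]
  congr 1
  refine Finset.sum_congr rfl fun a _ => ?_
  rw [add_comm 1 a]
end

open Polynomial Finset
open scoped ENNReal

def dset : List ℕ → Finset ℕ
  | [] => ∅
  | [_] => ∅
  | x :: y :: l => (if y < x then {1} else ∅) ∪ (dset (y :: l)).image (· + 1)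

lemma mem_dset : ∀ (l : List ℕ) (i : ℕ), i ∈ dset l ↔ 1 ≤ i ∧ i < l.length ∧ l.getD i 0 < l.getD (i-1) 0
  | [], i => by simp [dset]
  | [_], i => by simp [dset]; omega
  | x :: y :: l, i => by
    have ih := mem_dset (y :: l)
    rw [dset, mem_union, mem_image]
    simp only [ih]
    rcases i with _ | _ | i
    · split_ifs <;> simp
    · split_ifs with h <;> simp [h]
    · have h0 : i + 1 + 1 ∉ (if y < x then ({1} : Finset ℕ) else ∅) := by split_ifs <;> simp
      constructor
      · rintro (h | ⟨j, h, hj⟩)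
        · exact absurd h h0
        · have : j = i + 1 := by omega
          subst this
          simp at h ⊢
          tauto
      · rintro h
        right
        refine ⟨i+1, ?_, rfl⟩
        simp at h ⊢
        tauto

lemma dset_pos (l : List ℕ) : 0 ∉ dset l := by rw [mem_dset]; omega

lemma ntc_image (S : Finset ℕ) : NoTwoConsec (S.image (· + 1)) ↔ NoTwoConsec S := by
  simp [NoTwoConsec]

lemma ntc_insert (S : Finset ℕ) (h0 : 0 ∉ S) : NoTwoConsec ({1} ∪ S.image (· + 1)) ↔ NoTwoConsec S ∧ 1 ∉ S := by
  simp only [NoTwoConsec, mem_union, mem_singleton, mem_image]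
  constructor
  · intro h
    refine ⟨fun i hi hi' => h (i+1) (Or.inr ⟨i, hi, rfl⟩) (Or.inr ⟨i+1, hi', rfl⟩), fun h1 => h 1 (Or.inl rfl) (Or.inr ⟨1, h1, rfl⟩)⟩
  · rintro ⟨h1, h2⟩ i (rfl | ⟨j, hj, rfl⟩) (h | ⟨k, hk, h⟩)
    · omega
    · have : k = 1 := by omega
      subst this; exact h2 hk
    · have : j = 0 := by omega
      subst this; exact h0 hj
    · have : k = j + 1 := by omega
      subst this; exact h1 j hj hk

lemma DA_eq (T : ℝ) (l : List ℕ) : ∀ x : ℕ,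
    (NoTwoConsec (dset (x :: l)) → 2 * (dset (x :: l)).card ≤ l.length + 1) ∧
    (NoTwoConsec (dset (x :: l)) → 1 ∉ dset (x :: l) → 2 * (dset (x :: l)).card ≤ l.length) ∧
    (DA T l x).1 = (if NoTwoConsec (dset (x :: l)) ∧ 1 ∉ dset (x :: l) then
      T ^ (dset (x :: l)).card * (1 + T) ^ (l.length - 2 * (dset (x :: l)).card) else 0) ∧
    (DA T l x).2 = (if NoTwoConsec (dset (x :: l)) then
      T ^ (dset (x :: l)).card * (1 + T) ^ (l.length + 1 - 2 * (dset (x :: l)).card) else 0) := by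
  induction l with
  | nil =>
    intro x
    have : NoTwoConsec ∅ := by simp [NoTwoConsec]
    simp [dset, DA, this]
  | cons y l ih =>
    intro x
    obtain ⟨i1, i2, i3, i4⟩ := ih y
    have hp := dset_pos (y :: l)
    simp only [DA, List.length_cons]
    rw [dset]
    set S := dset (y :: l)
    have hc : (S.image (· + 1)).card = S.card := Finset.card_image_of_injective _ (add_left_injective 1)
    have h1' : 1 ∉ S.image (· + 1) := by simp [hp]
    rw [i3, i4]
    by_cases hyx : y < x
    · simp only [if_pos hyx]
      have hcc : ({1} ∪ S.image (· + 1)).card = S.card + 1 := by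
        rw [Finset.card_union_of_disjoint (by simpa using h1'), hc]; simp; omega
      rw [hcc]
      simp only [ntc_insert S hp]
      have m1 : 1 ∈ {1} ∪ S.image (· + 1) := by simp
      refine ⟨fun h => ?_, fun _ h => absurd m1 h, ?_, ?_⟩
      · have := i2 h.1 h.2; omega
      · rw [if_neg]; rintro ⟨_, h⟩; exact h m1
      · split_ifs with h
        · rw [show l.length + 1 + 1 - 2 * (S.card + 1) = l.length - 2 * S.card by omega]; ring
        · ring
    · simp only [if_neg hyx, Finset.empty_union]
      rw [hc]
      simp only [ntc_image]
      refine ⟨fun h => ?_, fun h _ => i1 h, ?_, ?_⟩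
      · have := i1 h; omega
      · simp [h1']
      · split_ifs with h
        · have := i1 h
          rw [show l.length + 1 + 1 - 2 * S.card = l.length + 1 - 2 * S.card + 1 by omega]; ring
        · ring

/-- Lehmer code entry. -/
def lcode {n : ℕ} (σ : Equiv.Perm (Fin n)) (i : Fin n) : ℕ :=
  (univ.filter fun j : Fin n => i < j ∧ σ j < σ i).card

lemma pinv_eq {n : ℕ} (σ : Equiv.Perm (Fin n)) : pinv σ = ∑ i, lcode σ i := by
  simp only [lcode, pinv]
  rw [← Finset.card_sigma]
  symm
  refine Finset.card_bij (fun p _ => ((p.1 : ℕ) + 1, (p.2 : ℕ) + 1)) ?_ ?_ ?_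
  · rintro ⟨i, j⟩ h
    simp only [mem_sigma, mem_univ, true_and, mem_filter] at h
    simp only [mem_filter, mem_product, mem_Icc, pval_succ]
    have := h.1; have h2 := h.2
    rw [Fin.lt_def] at this h2
    have := i.2; have := j.2
    omega
  · rintro ⟨i, j⟩ _ ⟨i', j'⟩ _ h
    simp only [Prod.mk.injEq, add_left_inj] at h
    obtain ⟨h1, h2⟩ := h
    obtain rfl := Fin.ext h1
    obtain rfl := Fin.ext h2
    rfl
  · rintro ⟨a, b⟩ h
    simp only [mem_filter, mem_product, mem_Icc] at h
    obtain ⟨⟨⟨ha, ha'⟩, hb, hb'⟩, hab, hv⟩ := h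
    obtain ⟨i, rfl⟩ : ∃ i : Fin n, a = i + 1 := ⟨⟨a - 1, by omega⟩, by simp; omega⟩
    obtain ⟨j, rfl⟩ : ∃ i : Fin n, b = i + 1 := ⟨⟨b - 1, by omega⟩, by simp; omega⟩
    rw [pval_succ, pval_succ] at hv
    refine ⟨⟨i, j⟩, ?_, rfl⟩
    simp only [mem_sigma, mem_univ, true_and, mem_filter, Fin.lt_def]
    omega

lemma lcode_desc {n : ℕ} (σ : Equiv.Perm (Fin (n+1))) (i : ℕ) (hi : i < n) :
    lcode σ ⟨i+1, by omega⟩ < lcode σ ⟨i, by omega⟩ ↔ σ ⟨i+1, by omega⟩ < σ ⟨i, by omega⟩ := by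
  constructor
  · intro h
    by_contra hc
    refine absurd h (not_lt.2 (Finset.card_le_card ?_))
    intro j hj
    simp only [mem_filter, mem_univ, true_and] at hj ⊢
    refine ⟨?_, lt_of_lt_of_le hj.2 (not_lt.1 hc)⟩
    have h1 := hj.1
    rw [Fin.lt_def] at h1 ⊢
    simp only at h1 ⊢
    have h2 : (j : ℕ) ≠ i + 1 := by
      intro h3
      have : j = ⟨i+1, by omega⟩ := Fin.ext h3
      rw [this] at hj
      exact hc hj.2
    omega
  · intro h
    refine Finset.card_lt_card ?_
    rw [Finset.ssubset_iff_of_subset]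
    · refine ⟨⟨i+1, by omega⟩, ?_, ?_⟩
      · simp [h]
      · simp
    · intro j hj
      simp only [mem_filter, mem_univ, true_and] at hj ⊢
      refine ⟨?_, hj.2.trans h⟩
      have h1 := hj.1
      rw [Fin.lt_def] at h1 ⊢
      simp only at h1 ⊢
      omega

def clist {n : ℕ} (σ : Equiv.Perm (Fin n)) : List ℕ := List.ofFn (lcode σ)

lemma dset_clist {n : ℕ} (σ : Equiv.Perm (Fin (n+1))) : dset (clist σ) = pDES σ := by
  ext i
  rw [mem_dset]
  rcases i with _ | i
  · simp [pDES]
  · by_cases hi : i < n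
    · rw [mem_pDES σ i hi, ← lcode_desc σ i hi]
      simp [clist, List.getD_eq_getElem?_getD, hi, Nat.lt_succ_of_lt hi, -List.ofFn_succ]
    · simp only [clist, List.length_ofFn, pDES, mem_filter, mem_Icc]
      omega

def pcons {n : ℕ} (x : Fin (n+1) × Equiv.Perm (Fin n)) : Equiv.Perm (Fin (n+1)) :=
  (Fin.cycleRange x.1).symm * Equiv.Perm.decomposeFin.symm (0, x.2)

lemma pcons_zero {n : ℕ} (x : Fin (n+1) × Equiv.Perm (Fin n)) : pcons x 0 = x.1 := by
  simp [pcons]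

lemma pcons_succ {n : ℕ} (x : Fin (n+1) × Equiv.Perm (Fin n)) (i : Fin n) : pcons x i.succ = x.1.succAbove (x.2 i) := by
  simp [pcons]

lemma pcons_bij (n : ℕ) : Function.Bijective (pcons (n := n)) := by
  rw [Fintype.bijective_iff_injective_and_card]
  constructor
  · rintro ⟨p, τ⟩ ⟨p', τ'⟩ h
    have h0 := congrArg (fun σ => σ 0) h
    simp only [pcons_zero] at h0
    subst h0
    congr 1
    ext i
    have h1 := congrArg (fun σ => σ i.succ) h
    simp only [pcons_succ] at h1
    rw [Fin.succAbove_right_injective h1]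
  · simp [Fintype.card_perm, Nat.factorial_succ]

lemma lcode_pcons_zero {n : ℕ} (x : Fin (n+1) × Equiv.Perm (Fin n)) : lcode (pcons x) 0 = x.1 := by
  rw [lcode, pcons_zero]
  have : (univ.filter fun j : Fin (n+1) => 0 < j ∧ pcons x j < x.1) = (Finset.Iio x.1).map (pcons x).symm.toEmbedding := by
    ext j
    simp only [mem_filter, mem_univ, true_and, mem_map_equiv, Equiv.symm_symm, mem_Iio]
    constructor
    · exact fun h => h.2
    · intro h
      refine ⟨?_, h⟩
      rw [Fin.pos_iff_ne_zero]
      rintro rfl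
      rw [pcons_zero] at h
      exact lt_irrefl _ h
  rw [this, Finset.card_map, Fin.card_Iio]

lemma lcode_pcons_succ {n : ℕ} (x : Fin (n+1) × Equiv.Perm (Fin n)) (i : Fin n) : lcode (pcons x) i.succ = lcode x.2 i := by
  rw [lcode, lcode]
  symm
  rw [← Finset.card_map (Fin.succEmb n)]
  congr 1
  ext j
  simp only [mem_map, mem_filter, mem_univ, true_and]
  constructor
  · rintro ⟨k, hk, rfl⟩
    simp only [Fin.coe_succEmb, pcons_succ, Fin.succ_lt_succ_iff]
    exact ⟨hk.1, (Fin.strictMono_succAbove _) hk.2⟩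
  · rintro ⟨h1, h2⟩
    obtain ⟨k, rfl⟩ : ∃ k : Fin n, j = k.succ := ⟨j.pred (by rintro rfl; exact absurd h1 (by simp)), by simp⟩
    refine ⟨k, ⟨Fin.succ_lt_succ_iff.1 h1, ?_⟩, rfl⟩
    rw [pcons_succ, pcons_succ] at h2
    exact (Fin.strictMono_succAbove _).lt_iff_lt.1 h2

lemma CSm_perm (q : ℝ) (n : ℕ) : ∀ F : List ℕ → ℝ, ∑ σ : Equiv.Perm (Fin n), q ^ pinv σ * F (clist σ) = CSm q n F := by
  induction n with
  | zero =>
    intro F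
    simp [CSm, pinv_eq, clist]
  | succ n ih =>
    intro F
    rw [CSm, ← (pcons_bij n).sum_comp, Fintype.sum_prod_type, Finset.sum_range]
    refine Finset.sum_congr rfl fun p _ => ?_
    rw [← ih (fun l => F (p :: l)), Finset.mul_sum]
    refine Finset.sum_congr rfl fun τ _ => ?_
    rw [pinv_eq, pinv_eq, Fin.sum_univ_succ, lcode_pcons_zero, clist, List.ofFn_succ, lcode_pcons_zero, pow_add]
    simp only [lcode_pcons_succ]
    rw [clist]
    ring

lemma gam_perm (q T : ℝ) (n : ℕ) : gam q T (n+1) = ∑ σ : Equiv.Perm (Fin (n+1)),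
    q ^ pinv σ * if NoTwoConsec (pDES σ) ∧ 1 ∉ pDES σ then T ^ (pDES σ).card * (1 + T) ^ (n - 2 * (pDES σ).card) else 0 := by
  rw [gam, ← CSm_perm]
  refine Finset.sum_congr rfl fun σ _ => ?_
  congr 1
  have h : clist σ = lcode σ 0 :: List.ofFn (fun i : Fin n => lcode σ i.succ) := by rw [clist, List.ofFn_succ]
  rw [h, WL, (DA_eq T _ _).2.2.1, ← h, dset_clist, List.length_ofFn]

lemma card_le_of_stable {n : ℕ} (σ : Equiv.Perm (Fin (n+1))) (h1 : NoTwoConsec (pDES σ)) (h2 : 1 ∉ pDES σ) : 2 * (pDES σ).card ≤ n := by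
  have h : clist σ = lcode σ 0 :: List.ofFn (fun i : Fin n => lcode σ i.succ) := by rw [clist, List.ofFn_succ]
  have := (DA_eq 0 (List.ofFn (fun i : Fin n => lcode σ i.succ)) (lcode σ 0)).2.1
  rw [← h, dset_clist, List.length_ofFn] at this
  exact this h1 h2

open Polynomial Finset
open scoped ENNReal

lemma Ceul_eq_gam {q t : ℝ} (hq0 : 0 < q) (hq1 : q < 1) (ht0 : 0 ≤ t) (ht1 : t < 1) (n : ℕ) :
    Ceul q t n = gam q (t * q) n := by
  have hT1 : t * q < 1 := by nlinarith
  have hne : 1 - t * q ≠ 0 := by linarith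
  induction n using Nat.strong_induction_on with
  | _ n ih =>
  rcases n with _ | n
  · simp [Ceul, gam, CSm, WL, pexc, pmaj, pDES]
  · have h := conv_main hq0 hq1 ht0 ht1 (n+1)
    rw [← Finset.Nat.sum_antidiagonal_swap, Finset.Nat.sum_antidiagonal_eq_sum_range_succ_mk, Finset.sum_range_succ'] at h
    simp only [Prod.swap, Prod.fst, Prod.snd] at h
    rw [gam_rec q (t*q) (by linarith)]
    have hn := (qf_pos hq0 hq1 (n+1)).ne'
    have key : ∑ a ∈ range (n+1), gbin q (n+1) (a+1) * wgt (t*q) (a+1) * gam q (t*q) (n - a)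
      = - (qf q (n+1) * (1 - t*q)⁻¹) * ∑ k ∈ range (n+1), Ceul q t (n + 1 - (k+1)) * (qf q (n + 1 - (k+1)))⁻¹ * (((t*q)^(k+1) - t*q) * (qf q (k+1))⁻¹) := by
      rw [Finset.mul_sum]
      refine Finset.sum_congr rfl fun a ha => ?_
      rw [mem_range] at ha
      rw [show n + 1 - (a+1) = n - a by omega, ih (n-a) (by omega), ← gbin_qf q (n+1) (a+1) (n-a) (by omega), wgt]
      have h1 := (qf_pos hq0 hq1 (a+1)).ne'
      have h2 := (qf_pos hq0 hq1 (n-a)).ne'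
      field_simp
      ring
    rw [key]
    have h3 := eq_sub_of_add_eq h
    rw [h3]
    have h0 : qf q 0 = 1 := by simp [qf]
    rw [h0]
    simp only [pow_zero, Nat.sub_zero]
    field_simp
    ring

lemma poly2_ext (P : Polynomial (Polynomial ℤ))
    (h : ∀ q T : ℝ, 0 < T → T < q → q < 1 → P.eval₂ (Polynomial.eval₂RingHom (Int.castRingHom ℝ) q) T = 0) : P = 0 := by
  have h1 : ∀ q : ℝ, 0 < q → q < 1 → P.map (Polynomial.eval₂RingHom (Int.castRingHom ℝ) q) = 0 := by
    intro q h0 h1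
    refine Polynomial.eq_zero_of_infinite_isRoot _ (Set.Infinite.mono ?_ (Set.Ioo_infinite h0))
    intro T hT
    simp only [Set.mem_setOf_eq, Polynomial.IsRoot.def, Polynomial.eval_map]
    exact h q T hT.1 hT.2 h1
  ext1 n
  rw [Polynomial.coeff_zero]
  have h2 : (P.coeff n).map (Int.castRingHom ℝ) = 0 := by
    refine Polynomial.eq_zero_of_infinite_isRoot _ (Set.Infinite.mono ?_ (Set.Ioo_infinite (zero_lt_one (α := ℝ))))
    intro q hq
    have := congrArg (fun p => p.coeff n) (h1 q hq.1 hq.2)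
    simp only [Polynomial.coeff_map, Polynomial.coeff_zero, Polynomial.coe_eval₂RingHom] at this
    simp only [Set.mem_setOf_eq, Polynomial.IsRoot.def, Polynomial.eval_map]
    exact this
  exact (Polynomial.map_eq_zero_iff (RingHom.injective_int _)).1 h2

/-- γ-expansion of the `q`-Eulerian polynomial:
`A_n(q,t) = Σ_k ξ_{n,k}(q) t^k (1+t)^{n-1-2k}` with
`ξ_{n,k}(q) = Σ q^{inv(σ)}` over all `σ ∈ S_n` with `DES(σ) ⊆ [2,n-1]`,
no two consecutive descents, and exactly `k` descents. -/
theorem Apoly_gamma_noFirst (n : ℕ) (hn : 1 ≤ n) :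
    Apoly n = ∑ k ∈ Finset.range ((n - 1) / 2 + 1),
      Polynomial.C (∑ σ ∈ Finset.univ.filter
            (fun σ : Equiv.Perm (Fin n) =>
              pDES σ ⊆ Finset.Icc 2 (n - 1) ∧ NoTwoConsec (pDES σ) ∧ (pDES σ).card = k),
          (Polynomial.X : Polynomial ℤ) ^ pinv σ) *
        Polynomial.X ^ k * (1 + Polynomial.X) ^ (n - 1 - 2 * k) := by
  obtain ⟨n, rfl⟩ : ∃ m, n = m + 1 := ⟨n - 1, by omega⟩
  rw [← sub_eq_zero]
  refine poly2_ext _ fun q T hT0 hTq hq1 => ?_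
  have hq0 : 0 < q := hT0.trans hTq
  rw [Polynomial.eval₂_sub, sub_eq_zero]
  have hL : (Apoly (n+1)).eval₂ (Polynomial.eval₂RingHom (Int.castRingHom ℝ) q) T = Ceul q (T / q) (n+1) := by
    rw [Apoly, Ceul, Polynomial.eval₂_finset_sum]
    refine Finset.sum_congr rfl fun σ _ => ?_
    obtain ⟨d, hd⟩ := Nat.exists_eq_add_of_le (pexc_le_pmaj σ)
    simp only [Polynomial.eval₂_mul, Polynomial.eval₂_C, Polynomial.eval₂_pow, Polynomial.eval₂_X, Polynomial.coe_eval₂RingHom]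
    rw [hd, Nat.add_sub_cancel_left, div_pow, pow_add]
    field_simp
  rw [hL, Ceul_eq_gam hq0 hq1 (by positivity) (by rw [div_lt_one hq0]; exact hTq), div_mul_cancel₀ _ hq0.ne', gam_perm]
  rw [Polynomial.eval₂_finset_sum]
  simp only [Polynomial.eval₂_mul, Polynomial.eval₂_C, Polynomial.eval₂_pow, Polynomial.eval₂_X, Polynomial.coe_eval₂RingHom, Polynomial.eval₂_add, Polynomial.eval₂_one, Polynomial.eval₂_finset_sum, Nat.add_sub_cancel]
  simp only [Finset.sum_filter, Finset.sum_mul]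
  rw [Finset.sum_comm]
  refine Finset.sum_congr rfl fun σ _ => ?_
  have hiff : pDES σ ⊆ Finset.Icc 2 n ↔ 1 ∉ pDES σ := by
    constructor
    · intro h h1
      have := h h1
      simp at this
    · intro h i hi
      have hi' := hi
      simp only [pDES, mem_filter, mem_Icc] at hi'
      have : i ≠ 1 := by rintro rfl; exact h hi
      rw [mem_Icc]; omega
  by_cases hc : NoTwoConsec (pDES σ) ∧ 1 ∉ pDES σ
  · have hle := card_le_of_stable σ hc.1 hc.2
    rw [if_pos hc, Finset.sum_eq_single (pDES σ).card]
    · rw [if_pos ⟨hiff.2 hc.2, hc.1, rfl⟩]; ring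
    · intro b _ hb
      rw [if_neg (fun h => hb h.2.2.symm)]; ring
    · intro h
      exact absurd (mem_range.2 (by omega)) h
  · rw [if_neg hc, mul_zero]
    symm
    refine Finset.sum_eq_zero fun k _ => ?_
    rw [if_neg (fun h => hc ⟨h.2.1, hiff.1 h.1⟩)]; ring
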